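/- Assume the uniform ellipticity condition (D3) and the regularity condition (R1). Let F and G be the unique weak solutions in 𝓕 of the Cauchy problem with respective initial conditions F₀ and G₀ (cumulative distribution functions with finite first moments), and assume each of F and G has classical regularity (C^{1,2} on (0,∞)×ℝ, solving the PDE pointwise) with (t,x) ↦ ∂_x F_t(x) and (t,x) ↦ ∂_x G_t(x) bounded on [t₁,t₂]×ℝ for all 0 < t₁ < t₂. Let p ≥ 2 be such that W_p(F₀,G₀) < +∞ and |x|^{p−1}(tl(F₀,x) + tl(G₀,x)) → 0 as x → ±∞. Then for all 0 < t₁ < t₂: W_p^p(F_{t₂},G_{t₂}) − W_p^p(F_{t₁},G_{t₁}) = −(p(p−1)/2) ∫_{t₁}^{t₂} ∫₀¹ a(u) |F_t^{-1}(u) − G_t^{-1}(u)|^{p−2} (∂_u F_t^{-1}(u) − ∂_u G_t^{-1}(u))² / (∂_u F_t^{-1}(u) ∂_u G_t^{-1}(u)) du dt. -/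

import Mathlib

open MeasureTheory Set Filter Topology Function
open scoped ENNReal

noncomputable section

/-- `primitive f u = ∫₀^u f(v) dv`. -/
def primitive (f : ℝ → ℝ) : ℝ → ℝ := fun u => ∫ v in (0:ℝ)..u, f v

/-- The cumulative distribution function `H * μ` of a measure `μ` on `ℝ`. -/
def cdfOf (μ : MeasureTheory.Measure ℝ) : ℝ → ℝ := fun x => (μ (Set.Iic x)).toReal

/-- Pseudo-inverse of a cdf: `F⁻¹(u) = inf {x | F x > u}`. -/
def pinv (F : ℝ → ℝ) (u : ℝ) : ℝ := sInf {x : ℝ | u < F x}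

/-- Wasserstein distance of order `p` between two cdfs, in `[0,∞]`. -/
def Wdist (p : ℝ) (F G : ℝ → ℝ) : ℝ≥0∞ :=
  (∫⁻ u in Set.Ioo (0:ℝ) 1, ENNReal.ofReal (|pinv F u - pinv G u| ^ p)) ^ (1/p)

/-- Tail function `tl(f,x) = 1_{x ≥ 0} (1 - f(x)) + 1_{x ≤ 0} f(x)`. -/
def tl (f : ℝ → ℝ) (x : ℝ) : ℝ :=
  (if 0 ≤ x then 1 - f x else 0) + (if x ≤ 0 then f x else 0)

/-- `F` is a weak solution of `∂ₜ F = (1/2) ∂ₓₓ (A (F)) - ∂ₓ (B (F))` with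
initial condition `F₀`. -/
def IsWeakSolution (A B : ℝ → ℝ) (F₀ : ℝ → ℝ) (F : ℝ → ℝ → ℝ) : Prop :=
  ∀ g : ℝ → ℝ → ℝ, ContDiff ℝ (⊤ : ℕ∞) (Function.uncurry g) →
    HasCompactSupport (Function.uncurry g) →
    ∀ t : ℝ, 0 ≤ t →
      ((∫ x : ℝ, g t x * F t x) - ∫ x : ℝ, g 0 x * F₀ x) =
        ∫ x : ℝ, ∫ s in (0:ℝ)..t,
          ((1/2) * A (F s x) * deriv (deriv (fun y => g s y)) x
            + B (F s x) * deriv (fun y => g s y) x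
            + F s x * deriv (fun r => g r x) s)

/-- Membership in the class `𝓕`. -/
def MemF (F : ℝ → ℝ → ℝ) : Prop :=
  ∃ P : ℝ → ProbabilityMeasure ℝ,
    ContinuousOn P (Set.Ici 0) ∧
    (∀ t : ℝ, 0 ≤ t → Integrable (fun x => |x|) (P t : Measure ℝ)) ∧
    (∀ T : ℝ, 0 < T → IntegrableOn (fun t => ∫ x, |x| ∂(P t : Measure ℝ)) (Set.Icc 0 T)) ∧
    (∀ t : ℝ, 0 ≤ t → ∀ x : ℝ, F t x = ((P t : Measure ℝ) (Set.Iic x)).toReal)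

/-- `F` has the classical regularity: it is `C^{1,2}` on `(0,∞) × ℝ` and solves the
Cauchy problem `∂ₜ F = (1/2) ∂ₓₓ (A(F)) - ∂ₓ (B(F))` in the classical sense there. -/
def HasClassicalRegularity (a b : ℝ → ℝ) (F : ℝ → ℝ → ℝ) : Prop :=
  ∃ Ft Fx Fxx : ℝ → ℝ → ℝ,
    (∀ t : ℝ, 0 < t → ∀ x : ℝ,
      HasDerivAt (fun s => F s x) (Ft t x) t ∧
      HasDerivAt (fun y => F t y) (Fx t x) x ∧
      HasDerivAt (fun y => Fx t y) (Fxx t x) x) ∧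
    ContinuousOn (fun q : ℝ × ℝ => F q.1 q.2) (Set.Ioi 0 ×ˢ (Set.univ : Set ℝ)) ∧
    ContinuousOn (fun q : ℝ × ℝ => Ft q.1 q.2) (Set.Ioi 0 ×ˢ (Set.univ : Set ℝ)) ∧
    ContinuousOn (fun q : ℝ × ℝ => Fx q.1 q.2) (Set.Ioi 0 ×ˢ (Set.univ : Set ℝ)) ∧
    ContinuousOn (fun q : ℝ × ℝ => Fxx q.1 q.2) (Set.Ioi 0 ×ˢ (Set.univ : Set ℝ)) ∧
    (∀ t : ℝ, 0 < t → ∀ x : ℝ,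
      Ft t x = (1/2) * deriv (fun y => deriv (fun z => primitive a (F t z)) y) x
        - deriv (fun y => primitive b (F t y)) x)

/-! In the variables `(t, u)` the quantile functions `X = F_t⁻¹` and `Y = G_t⁻¹` solve
`∂ₜX = b(u) - ½ ∂ᵤ(a(u) / ∂ᵤX)`, so that differentiating `∫₀¹ |X - Y|^p du` and integrating by parts
in `u` produces the dissipation formally. The strong maximum principle makes `∂ₓF_t` positive, so
that `X` and `Y` are smooth. To avoid boundary terms at `u = 0, 1`, the positions are truncated by a
map `T_R` with `T_R(x) = x` for `|x| ≤ R` and `T_R'` compactly supported: the identity for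
`T_R(X) - T_R(Y)` is exact up to an error carried by `{|X| ≥ R} ∪ {|Y| ≥ R}` of size
`R^(p-1) · P(|x| ≥ R)`. The tail condition at time `0` propagates in time, because testing the weak
formulation with a bump at scale `r` bounds the tail at `2r` by the initial tail plus `O(1/r)` times
the tail at `r`. Hence the error vanishes as `R → ∞`, uniformly down to time `0`, where
`W_p(F₀, G₀) < ∞` bounds the truncated energies; monotone convergence in `R` concludes. -/

/-! ### Primitives and cumulative distribution functions -/

theorem hasDerivAt_primitive {f : ℝ → ℝ} (hf : ContinuousOn f (Icc 0 1)) {u : ℝ}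
    (hu : u ∈ Ioo (0 : ℝ) 1) : HasDerivAt (primitive f) (f u) u := by
  have hInt : IntervalIntegrable f volume 0 u :=
    (hf.mono (by rw [uIcc_of_le hu.1.le]; gcongr; exact hu.2.le)).intervalIntegrable
  have hf' : ContinuousOn f (Ioo 0 1) := hf.mono Ioo_subset_Icc_self
  exact intervalIntegral.integral_hasDerivAt_right hInt
    (hf'.stronglyMeasurableAtFilter isOpen_Ioo u hu)
    (hf'.continuousAt (isOpen_Ioo.mem_nhds hu))

theorem exists_lipschitzOnWith_primitive {f : ℝ → ℝ} (hf : ContinuousOn f (Icc 0 1)) :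
    ∃ C, LipschitzOnWith C (primitive f) (Icc 0 1) := by
  obtain ⟨C, hC⟩ := isCompact_Icc.exists_bound_of_continuousOn hf
  refine ⟨C.toNNReal, LipschitzOnWith.of_dist_le' fun u hu v hv => ?_⟩
  have hInt : ∀ w ∈ Icc (0 : ℝ) 1, IntervalIntegrable f volume 0 w := fun w hw =>
    (hf.mono (by rw [uIcc_of_le hw.1]; gcongr; exact hw.2)).intervalIntegrable
  rw [primitive, primitive, dist_eq_norm,
    intervalIntegral.integral_interval_sub_left (hInt u hu) (hInt v hv)]
  exact intervalIntegral.norm_integral_le_of_norm_le_const fun x hx =>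
    hC x (ordConnected_Icc.uIcc_subset hv hu (uIoc_subset_uIcc hx))

/-- `f` is the cumulative distribution function of a probability measure on `ℝ`, expressed through
its characteristic properties. -/
structure IsCDF (f : ℝ → ℝ) : Prop where
  monotone : Monotone f
  continuousWithinAt_Ici : ∀ x, ContinuousWithinAt f (Ici x) x
  tendsto_atBot : Tendsto f atBot (𝓝 0)
  tendsto_atTop : Tendsto f atTop (𝓝 1)

theorem IsCDF.mem_Icc {f : ℝ → ℝ} (hf : IsCDF f) (x : ℝ) : f x ∈ Icc (0 : ℝ) 1 :=
  ⟨hf.monotone.le_of_tendsto hf.tendsto_atBot x, hf.monotone.ge_of_tendsto hf.tendsto_atTop x⟩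

theorem isCDF_cdfOf (μ : Measure ℝ) [IsProbabilityMeasure μ] : IsCDF (cdfOf μ) := by
  have heq : cdfOf μ = ProbabilityTheory.cdf μ := by
    funext x
    rw [ProbabilityTheory.cdf_eq_real]
    rfl
  rw [heq]
  exact ⟨ProbabilityTheory.monotone_cdf μ, (ProbabilityTheory.cdf μ).right_continuous,
    ProbabilityTheory.tendsto_cdf_atBot μ, ProbabilityTheory.tendsto_cdf_atTop μ⟩

/-- `F` is, on `[0, ∞)`, the flow of cumulative distribution functions of a weakly continuous curve
of probability measures. This is the class `𝓕` without its moment conditions. -/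
def IsCDFFlow (F : ℝ → ℝ → ℝ) : Prop :=
  ∃ P : ℝ → ProbabilityMeasure ℝ, ContinuousOn P (Ici 0) ∧ ∀ t, 0 ≤ t → F t = cdfOf (P t)

theorem MemF.isCDFFlow {F : ℝ → ℝ → ℝ} (hF : MemF F) : IsCDFFlow F := by
  obtain ⟨P, hP, -, -, hPF⟩ := hF
  exact ⟨P, hP, fun t ht => funext (hPF t ht)⟩

theorem IsCDFFlow.isCDF {F : ℝ → ℝ → ℝ} (hF : IsCDFFlow F) {t : ℝ} (ht : 0 ≤ t) :
    IsCDF (F t) := by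
  obtain ⟨P, -, hPF⟩ := hF
  rw [hPF t ht]
  exact isCDF_cdfOf _

/-! ### Classical solutions -/

/-- A classical solution on `(0, ∞) × ℝ` of `∂ₜ F = (1/2) ∂ₓₓ (A(F)) - ∂ₓ (B(F))`, `A' = a`,
`B' = b`, whose values `F_t` are cumulative distribution functions. The equation is in
nondivergence form, so that `A` and `B` do not have to be differentiated at `0` and `1`. -/
structure ClassicalFlow (a b : ℝ → ℝ) where
  /-- the solution `F` -/
  cdf : ℝ → ℝ → ℝ
  /-- the time derivative `∂ₜ F` -/
  dt : ℝ → ℝ → ℝ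
  /-- the density `∂ₓ F` -/
  dx : ℝ → ℝ → ℝ
  /-- the second space derivative `∂ₓₓ F` -/
  dxx : ℝ → ℝ → ℝ
  hasDerivAt_time : ∀ {t : ℝ}, 0 < t → ∀ x, HasDerivAt (fun s => cdf s x) (dt t x) t
  hasDerivAt_space : ∀ {t : ℝ}, 0 < t → ∀ x, HasDerivAt (cdf t) (dx t x) x
  hasDerivAt_dx : ∀ {t : ℝ}, 0 < t → ∀ x, HasDerivAt (dx t) (dxx t x) x
  continuousOn_cdf : ContinuousOn (uncurry cdf) (Ioi 0 ×ˢ univ)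
  continuousOn_dt : ContinuousOn (uncurry dt) (Ioi 0 ×ˢ univ)
  continuousOn_dx : ContinuousOn (uncurry dx) (Ioi 0 ×ˢ univ)
  continuousOn_dxx : ContinuousOn (uncurry dxx) (Ioi 0 ×ˢ univ)
  isCDF : ∀ {t : ℝ}, 0 < t → IsCDF (cdf t)
  dt_eq : ∀ {t : ℝ}, 0 < t → ∀ x, dt t x =
    1 / 2 * (derivWithin a (Icc 0 1) (cdf t x) * dx t x ^ 2 + a (cdf t x) * dxx t x)
      - b (cdf t x) * dx t x

theorem hasDerivAt_eq_zero_of_eqOn_const {f : ℝ → ℝ} {f' c x : ℝ} {s : Set ℝ}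
    (hf : HasDerivAt f f' x) (hs : UniqueDiffWithinAt ℝ s x) (hx : x ∈ s)
    (hfc : ∀ y ∈ s, f y = c) : f' = 0 :=
  hs.eq_deriv _ hf.hasDerivWithinAt ((hasDerivWithinAt_const x s c).congr hfc (hfc x hx))

theorem derivs_eq_zero_of_eqOn_const {f f' : ℝ → ℝ} {f'' c x : ℝ} {s : Set ℝ}
    (hs : UniqueDiffOn ℝ s) (hx : x ∈ s) (hfc : ∀ y ∈ s, f y = c)
    (hf : ∀ y, HasDerivAt f (f' y) y) (hf' : HasDerivAt f' f'' x) : f' x = 0 ∧ f'' = 0 := by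
  have hzero : ∀ y ∈ s, f' y = 0 := fun y hy =>
    hasDerivAt_eq_zero_of_eqOn_const (hf y) (hs y hy) hy hfc
  exact ⟨hzero x hx, hasDerivAt_eq_zero_of_eqOn_const hf' (hs x hx) hx hzero⟩

theorem IsCDF.derivs_eq_zero_of_notMem_Ioo {f f' : ℝ → ℝ} {f'' x : ℝ} (hcdf : IsCDF f)
    (hf : ∀ y, HasDerivAt f (f' y) y) (hf' : HasDerivAt f' f'' x) (hx : f x ∉ Ioo (0 : ℝ) 1) :
    f' x = 0 ∧ f'' = 0 := by
  rcases eq_endpoints_or_mem_Ioo_of_mem_Icc (hcdf.mem_Icc x) with h0 | h1 | h01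
  · exact derivs_eq_zero_of_eqOn_const (uniqueDiffOn_Iic x) self_mem_Iic (c := 0)
      (fun y hy => le_antisymm (h0 ▸ hcdf.monotone hy) (hcdf.mem_Icc y).1) hf hf'
  · exact derivs_eq_zero_of_eqOn_const (uniqueDiffOn_Ici x) self_mem_Ici (c := 1)
      (fun y hy => le_antisymm (hcdf.mem_Icc y).2 (h1 ▸ hcdf.monotone hy)) hf hf'
  · exact absurd h01 hx

theorem hasDerivAt_eq_zero_of_notMem_Ioo {f : ℝ → ℝ} {f' t : ℝ} (hf : HasDerivAt f f' t)
    (hI : ∀ᶠ s in 𝓝 t, f s ∈ Icc (0 : ℝ) 1) (ht : f t ∉ Ioo (0 : ℝ) 1) : f' = 0 := by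
  rcases eq_endpoints_or_mem_Ioo_of_mem_Icc hI.self_of_nhds with h0 | h1 | h01
  · exact IsLocalMin.hasDerivAt_eq_zero (hI.mono fun s hs => h0 ▸ hs.1) hf
  · exact IsLocalMax.hasDerivAt_eq_zero (hI.mono fun s hs => h1 ▸ hs.2) hf
  · exact absurd h01 ht

theorem hasDerivAt_derivWithin_Icc {a : ℝ → ℝ} (ha : DifferentiableOn ℝ a (Icc 0 1)) {u : ℝ}
    (hu : u ∈ Ioo (0 : ℝ) 1) : HasDerivAt a (derivWithin a (Icc 0 1) u) u :=
  (ha u (Ioo_subset_Icc_self hu)).hasDerivWithinAt.hasDerivAt (Icc_mem_nhds hu.1 hu.2)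

theorem divergence_form_eq {a b f f' : ℝ → ℝ} {f'' x : ℝ} (ha : DifferentiableOn ℝ a (Icc 0 1))
    (hb : ContinuousOn b (Icc 0 1)) (hf : ∀ y, HasDerivAt f (f' y) y)
    (hf' : HasDerivAt f' f'' x) (hx : f x ∈ Ioo (0 : ℝ) 1) :
    1 / 2 * deriv (fun y => deriv (fun z => primitive a (f z)) y) x
        - deriv (fun y => primitive b (f y)) x
      = 1 / 2 * (derivWithin a (Icc 0 1) (f x) * f' x ^ 2 + a (f x) * f'') - b (f x) * f' x := by
  have hnear : ∀ᶠ y in 𝓝 x, f y ∈ Ioo (0 : ℝ) 1 :=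
    (hf x).continuousAt.eventually (isOpen_Ioo.mem_nhds hx)
  have hA : (fun y => deriv (fun z => primitive a (f z)) y) =ᶠ[𝓝 x] fun y => a (f y) * f' y := by
    filter_upwards [hnear] with y hy
    exact ((hasDerivAt_primitive ha.continuousOn hy).comp y (hf y)).deriv
  have hAA : deriv (fun y => a (f y) * f' y) x
      = derivWithin a (Icc 0 1) (f x) * f' x * f' x + a (f x) * f'' :=
    (((hasDerivAt_derivWithin_Icc ha hx).comp x (hf x)).mul hf').deriv
  have hB : deriv (fun y => primitive b (f y)) x = b (f x) * f' x :=
    ((hasDerivAt_primitive hb hx).comp x (hf x)).deriv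
  rw [hA.deriv_eq, hAA, hB]
  ring

theorem HasClassicalRegularity.exists_classicalFlow {a b : ℝ → ℝ}
    (ha : DifferentiableOn ℝ a (Icc 0 1)) (hb : ContinuousOn b (Icc 0 1)) {F : ℝ → ℝ → ℝ}
    (hcl : HasClassicalRegularity a b F) (hF : ∀ t, 0 < t → IsCDF (F t)) :
    ∃ S : ClassicalFlow a b, S.cdf = F := by
  obtain ⟨Ft, Fx, Fxx, hd, hcF, hcFt, hcFx, hcFxx, hpde⟩ := hcl
  refine ⟨⟨F, Ft, Fx, Fxx, fun ht x => (hd _ ht x).1, fun ht x => (hd _ ht x).2.1,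
    fun ht x => (hd _ ht x).2.2, hcF, hcFt, hcFx, hcFxx, fun ht => hF _ ht,
    fun {t} ht x => ?_⟩, rfl⟩
  by_cases hx : F t x ∈ Ioo (0 : ℝ) 1
  · rw [hpde t ht x]
    exact divergence_form_eq ha hb (fun y => (hd t ht y).2.1) (hd t ht x).2.2 hx
  · obtain ⟨hFx, hFxx⟩ := (hF t ht).derivs_eq_zero_of_notMem_Ioo (fun y => (hd t ht y).2.1)
      (hd t ht x).2.2 hx
    have hFt : Ft t x = 0 := hasDerivAt_eq_zero_of_notMem_Ioo (hd t ht x).1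
      ((eventually_gt_nhds ht).mono fun s hs => (hF s hs).mem_Icc x) hx
    rw [hFt, hFx, hFxx]
    ring

/-! ### Positivity of the density -/

theorem second_deriv_nonneg_of_isLocalMin {f f' : ℝ → ℝ} {x f'' : ℝ} (h : IsLocalMin f x)
    (hf : ∀ y, HasDerivAt f (f' y) y) (hf' : HasDerivAt f' f'' x) : 0 ≤ f'' := by
  by_contra! hneg
  have hderiv : deriv f = f' := funext fun y => (hf y).deriv
  have hmax : IsLocalMax f x := isLocalMax_of_deriv_deriv_neg
    (by rwa [hderiv, hf'.deriv]) (by rw [hderiv, h.hasDerivAt_eq_zero (hf x)]) (hf x).continuousAt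
  have hconst : f =ᶠ[𝓝 x] fun _ => f x := by
    filter_upwards [h, hmax] with y hmin hmax using le_antisymm hmax hmin
  have hzero : f' =ᶠ[𝓝 x] fun _ => (0 : ℝ) := by
    filter_upwards [hconst.eventuallyEq_nhds] with y hy
    rw [← (hf y).deriv, hy.deriv_eq, deriv_const]
  exact hneg.ne ((hf'.congr_of_eventuallyEq hzero.symm).unique (hasDerivAt_const x 0))

theorem deriv_nonpos_of_eventually_le_left {f : ℝ → ℝ} {f' t : ℝ} (hf : HasDerivAt f f' t)
    (h : ∀ᶠ s in 𝓝[<] t, f t ≤ f s) : f' ≤ 0 := by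
  have hslope := hf.hasDerivWithinAt (s := Iio t)
  rw [hasDerivWithinAt_iff_tendsto_slope' self_notMem_Iio] at hslope
  refine le_of_tendsto hslope ?_
  filter_upwards [h, self_mem_nhdsWithin] with s hs hst
  rw [slope_def_field]
  exact div_nonpos_of_nonneg_of_nonpos (sub_nonneg.2 hs) (sub_nonpos.2 (le_of_lt hst))

theorem deriv_pos_of_linear_le_symm_sub {f : ℝ → ℝ} {f' x κ ρ : ℝ} (hf : HasDerivAt f f' x)
    (hκ : 0 < κ) (hρ : 0 < ρ) (h : ∀ r ∈ Ioo 0 ρ, κ * r ≤ f (x + r) - f (x - r)) : 0 < f' := by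
  have hsymm : HasDerivAt (fun r => f (x + r) - f (x - r)) (2 * f') 0 := by
    have hplus := (show HasDerivAt f f' (x + 0) by simpa using hf).comp 0
      ((hasDerivAt_id (0 : ℝ)).const_add x)
    have hminus := (show HasDerivAt f f' (x - 0) by simpa using hf).comp 0
      ((hasDerivAt_id (0 : ℝ)).const_sub x)
    exact (hplus.sub hminus).congr_deriv (by ring)
  have hslope := hsymm.hasDerivWithinAt (s := Ioi 0)
  rw [hasDerivWithinAt_iff_tendsto_slope' self_notMem_Ioi] at hslope
  have hle : κ ≤ 2 * f' := by
    refine ge_of_tendsto hslope ?_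
    filter_upwards [Ioo_mem_nhdsGT hρ] with r hr
    rw [slope_def_field, le_div_iff₀ (by simpa using hr.1)]
    simpa using h r hr
  linarith

/-- `K` and `Λ` are exponents for which `exp (-Λ t) (exp (K q) - 1)` is a strict subsolution,
where `q > 0` decreases quadratically away from a centre at squared distance `σ`, for every
operator with ellipticity constant `c` and with lower order terms of size at most `M`. -/
def IsBarrierExponents (c M K Λ : ℝ) : Prop :=
  0 < K ∧ ∀ q σ, 0 < q → 0 ≤ σ → 1 ≤ q + σ →
    0 < K * Real.exp (K * q) * (2 * K * c * σ - M) + Λ * (Real.exp (K * q) - 1)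

/- Away from the centre (`σ ≥ 1 / 2`) the second order term dominates for `K` large; close to it,
`exp (K q) - 1` is comparable to `exp (K q)` and a large `Λ` takes over. -/
theorem exists_isBarrierExponents {c M : ℝ} (hc : 0 < c) (hM : 0 ≤ M) :
    ∃ K Λ, IsBarrierExponents c M K Λ := by
  set K := (M + 1) / c
  have hK0 : 0 < K := by positivity
  have hKc : K * c = M + 1 := div_mul_cancel₀ _ hc.ne'
  have hexp : 0 < 1 - Real.exp (-(K / 2)) := by
    rw [sub_pos, Real.exp_lt_one_iff]
    linarith
  set Λ := K * (M + 1) / (1 - Real.exp (-(K / 2))) with hΛ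
  have hΛ0 : 0 < Λ := by positivity
  refine ⟨K, Λ, hK0, fun q σ hq hσ hqσ => ?_⟩
  have hP : 1 < Real.exp (K * q) := Real.one_lt_exp_iff.2 (by positivity)
  rcases le_or_gt (1 / 2) σ with hfar | hnear
  · have hdom : 0 < 2 * K * c * σ - M := by nlinarith
    have := mul_pos hΛ0 (sub_pos.2 hP)
    positivity
  · have hcompare : Real.exp (K * q) * (1 - Real.exp (-(K / 2))) ≤ Real.exp (K * q) - 1 := by
      have : 1 ≤ Real.exp (K * q) * Real.exp (-(K / 2)) := by
        rw [← Real.exp_add]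
        exact Real.one_le_exp (by nlinarith)
      linarith
    calc 0 < K * Real.exp (K * q) * (2 * K * c * σ + 1) := by positivity
      _ = K * Real.exp (K * q) * (2 * K * c * σ - M)
          + Λ * (Real.exp (K * q) * (1 - Real.exp (-(K / 2)))) := by
        rw [hΛ]; field_simp; ring
      _ ≤ _ := by gcongr

theorem barrier_operator_lower_bound {c C Γ ρ K ξ η α₁ α₂ γ₁ γ₂ : ℝ} (hK : 0 ≤ K)
    (hα₁ : α₁ ∈ Icc c C) (hα₂ : α₂ ∈ Icc c C) (hγ₁ : |γ₁| ≤ Γ) (hγ₂ : |γ₂| ≤ Γ)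
    (hξ : |ξ| ≤ 2 * ρ) (hη : |η| ≤ 2 * ρ) :
    2 * K * c * (ξ ^ 2 + η ^ 2) - (2 * C + 8 * Γ * ρ) ≤
      1 / 2 * α₁ * (4 * K * ξ ^ 2 - 2) + 1 / 2 * α₂ * (4 * K * η ^ 2 - 2)
        + γ₁ * (-2 * ξ) + γ₂ * (-2 * η) := by
  have hdrift : ∀ {γ ζ : ℝ}, |γ| ≤ Γ → |ζ| ≤ 2 * ρ → γ * ζ ≤ Γ * (2 * ρ) := fun hγ hζ =>
    (le_abs_self _).trans <| by
      rw [abs_mul]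
      exact mul_le_mul hγ hζ (abs_nonneg _) ((abs_nonneg _).trans hγ)
  have hell : ∀ {α ζ : ℝ}, α ∈ Icc c C → c * (K * ζ ^ 2) ≤ α * (K * ζ ^ 2) := fun hα => by
    gcongr
    exact hα.1
  linarith [hdrift hγ₁ hξ, hdrift hγ₂ hη, hell (ζ := ξ) hα₁, hell (ζ := η) hα₂, hα₁.2, hα₂.2]

theorem IsBarrierExponents.strict_subsolution {c C Γ ρ m K Λ q ξ η α₁ α₂ γ₁ γ₂ : ℝ}
    (h : IsBarrierExponents c (2 * C + 8 * Γ * ρ + m) K Λ)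
    (hα₁ : α₁ ∈ Icc c C) (hα₂ : α₂ ∈ Icc c C) (hγ₁ : |γ₁| ≤ Γ) (hγ₂ : |γ₂| ≤ Γ)
    (hξ : |ξ| ≤ 2 * ρ) (hη : |η| ≤ 2 * ρ) (hq : 0 < q) (hr : 1 ≤ q + (ξ ^ 2 + η ^ 2)) :
    -Λ * (Real.exp (K * q) - 1) + K * Real.exp (K * q) * m <
      K * Real.exp (K * q) * (1 / 2 * α₁ * (4 * K * ξ ^ 2 - 2) + 1 / 2 * α₂ * (4 * K * η ^ 2 - 2)
        + γ₁ * (-2 * ξ) + γ₂ * (-2 * η)) := by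
  have hlow := mul_le_mul_of_nonneg_left
    (barrier_operator_lower_bound h.1.le hα₁ hα₂ hγ₁ hγ₂ hξ hη)
    (mul_pos h.1 (Real.exp_pos (K * q))).le
  have hpos := h.2 q (ξ ^ 2 + η ^ 2) hq (by positivity) hr
  linarith

theorem hasDerivAt_const_mul_exp_sub_one {q : ℝ → ℝ} {q' z : ℝ} (A K : ℝ) (hq : HasDerivAt q q' z) :
    HasDerivAt (fun z => A * (Real.exp (K * q z) - 1)) (A * (Real.exp (K * q z) * (K * q'))) z :=
  (((hq.const_mul K).exp).sub_const 1).const_mul A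

theorem hasDerivAt_deriv_const_mul_exp_sub_one {q : ℝ → ℝ} {z₀ z : ℝ} (A K : ℝ)
    (hq : HasDerivAt q (-2 * (z - z₀)) z) :
    HasDerivAt (fun z => A * (Real.exp (K * q z) * (K * (-2 * (z - z₀)))))
      (A * (K * Real.exp (K * q z) * (4 * K * (z - z₀) ^ 2 - 2))) z := by
  have hlin : HasDerivAt (fun z => K * (-2 * (z - z₀))) (K * (-2 * 1)) z :=
    (((hasDerivAt_id z).sub_const z₀).const_mul (-2)).const_mul K
  exact (((hq.const_mul K).exp.mul hlin).const_mul A).congr_deriv (by ring)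

/-- A region of space-time in which the values of a solution at two points `x` and `y` are compared:
at time `t ∈ [t₁, t₀]`, the point `(x, y)` runs through a disc around `(x₀ + ρ, x₀ - ρ)`, whose
squared radius grows linearly from `1` at `t₁` to `2 ρ ^ 2` at `t₀`, when it reaches `(x₀, x₀)`. -/
structure GrowingDisc where
  /-- the initial time -/
  t₁ : ℝ
  /-- the final time -/
  t₀ : ℝ
  /-- the point reached at the final time -/
  x₀ : ℝ
  /-- the offset of the centre -/
  ρ : ℝ
  pos : 0 < t₁
  lt : t₁ < t₀
  one_le : 1 ≤ ρ

namespace GrowingDisc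

variable (D : GrowingDisc)

/-- The growth rate of the squared radius. -/
def rate : ℝ := (2 * D.ρ ^ 2 - 1) / (D.t₀ - D.t₁)

/-- The squared radius minus the squared distance to the centre. -/
def depth (t x y : ℝ) : ℝ :=
  1 + D.rate * (t - D.t₁) - (x - (D.x₀ + D.ρ)) ^ 2 - (y - (D.x₀ - D.ρ)) ^ 2

/-- The space-time region swept by the growing disc. -/
def region : Set (ℝ × ℝ × ℝ) := {z | z.1 ∈ Icc D.t₁ D.t₀ ∧ 0 ≤ D.depth z.1 z.2.1 z.2.2}

/-- Hopf's exponential barrier on the growing disc. -/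
def barrier (ε K Λ t x y : ℝ) : ℝ :=
  ε * Real.exp (-Λ * (t - D.t₁)) * (Real.exp (K * D.depth t x y) - 1)

theorem ρ_pos : 0 < D.ρ := zero_lt_one.trans_le D.one_le

theorem rate_mul : D.rate * (D.t₀ - D.t₁) = 2 * D.ρ ^ 2 - 1 :=
  div_mul_cancel₀ _ (sub_pos.2 D.lt).ne'

theorem rate_nonneg : 0 ≤ D.rate :=
  div_nonneg (by nlinarith [D.one_le]) (sub_pos.2 D.lt).le

theorem radius_sq_mem_Icc {t : ℝ} (ht : t ∈ Icc D.t₁ D.t₀) :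
    1 + D.rate * (t - D.t₁) ∈ Icc 1 (2 * D.ρ ^ 2) := by
  have hupper : D.rate * (t - D.t₁) ≤ D.rate * (D.t₀ - D.t₁) :=
    mul_le_mul_of_nonneg_left (by linarith [ht.2]) D.rate_nonneg
  have hlower : 0 ≤ D.rate * (t - D.t₁) := mul_nonneg D.rate_nonneg (sub_nonneg.2 ht.1)
  exact ⟨by linarith, by linarith [D.rate_mul]⟩

theorem bounds_of_mem_region {t x y : ℝ} (h : (t, x, y) ∈ D.region) :
    |x - (D.x₀ + D.ρ)| ≤ 2 * D.ρ ∧ |y - (D.x₀ - D.ρ)| ≤ 2 * D.ρ ∧ y ≤ x := by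
  obtain ⟨ht, hdepth⟩ := h
  have hradius := (D.radius_sq_mem_Icc ht).2
  have hρ := D.ρ_pos
  simp only [depth] at hdepth
  have hdiff : ((x - (D.x₀ + D.ρ)) - (y - (D.x₀ - D.ρ))) ^ 2 ≤ (2 * D.ρ) ^ 2 := by
    nlinarith [sq_nonneg ((x - (D.x₀ + D.ρ)) + (y - (D.x₀ - D.ρ)))]
  refine ⟨abs_le_of_sq_le_sq (by nlinarith [sq_nonneg (y - (D.x₀ - D.ρ))]) (by linarith),
    abs_le_of_sq_le_sq (by nlinarith [sq_nonneg (x - (D.x₀ + D.ρ))]) (by linarith), ?_⟩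
  linarith [(abs_le.1 (abs_le_of_sq_le_sq hdiff (by linarith))).1]

theorem mem_Icc_of_mem_region {t x y : ℝ} (h : (t, x, y) ∈ D.region) :
    x ∈ Icc (D.x₀ - 3 * D.ρ) (D.x₀ + 3 * D.ρ) ∧ y ∈ Icc (D.x₀ - 3 * D.ρ) (D.x₀ + 3 * D.ρ) := by
  obtain ⟨hx, hy, -⟩ := D.bounds_of_mem_region h
  rw [abs_le] at hx hy
  exact ⟨⟨by linarith, by linarith⟩, ⟨by linarith, by linarith⟩⟩

theorem continuous_depth : Continuous fun z : ℝ × ℝ × ℝ => D.depth z.1 z.2.1 z.2.2 := by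
  unfold depth
  fun_prop

theorem isCompact_region : IsCompact D.region := by
  refine IsCompact.of_isClosed_subset (s := Icc D.t₁ D.t₀ ×ˢ
    (Icc (D.x₀ - 3 * D.ρ) (D.x₀ + 3 * D.ρ) ×ˢ Icc (D.x₀ - 3 * D.ρ) (D.x₀ + 3 * D.ρ)))
    (isCompact_Icc.prod (isCompact_Icc.prod isCompact_Icc)) ?_ ?_
  · exact (isClosed_Icc.preimage continuous_fst).inter
      (isClosed_le continuous_const D.continuous_depth)
  · rintro ⟨t, x, y⟩ h
    exact ⟨h.1, D.mem_Icc_of_mem_region h⟩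

theorem eventually_mem_region {t x y : ℝ} (ht : D.t₁ < t) (hdepth : 0 < D.depth t x y) :
    ∀ᶠ z in 𝓝 (t, x, y), z.1 ≤ D.t₀ → z ∈ D.region := by
  filter_upwards [D.continuous_depth.continuousAt.eventually (lt_mem_nhds hdepth),
    continuous_fst.continuousAt.eventually (lt_mem_nhds ht)] with z hz htz hle
  exact ⟨⟨htz.le, hle⟩, hz.le⟩

theorem hasDerivAt_depth_fst (t x y : ℝ) :
    HasDerivAt (fun x => D.depth t x y) (-2 * (x - (D.x₀ + D.ρ))) x :=
  (((((hasDerivAt_id x).sub_const (D.x₀ + D.ρ)).pow 2).const_sub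
    (1 + D.rate * (t - D.t₁))).sub_const ((y - (D.x₀ - D.ρ)) ^ 2)).congr_deriv (by simp)

theorem hasDerivAt_depth_snd (t x y : ℝ) :
    HasDerivAt (fun y => D.depth t x y) (-2 * (y - (D.x₀ - D.ρ))) y :=
  ((((hasDerivAt_id y).sub_const (D.x₀ - D.ρ)).pow 2).const_sub
    (1 + D.rate * (t - D.t₁) - (x - (D.x₀ + D.ρ)) ^ 2)).congr_deriv (by simp)

theorem hasDerivAt_barrier_time (ε K Λ t x y : ℝ) :
    HasDerivAt (fun t => D.barrier ε K Λ t x y)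
      (ε * Real.exp (-Λ * (t - D.t₁)) * (-Λ * (Real.exp (K * D.depth t x y) - 1)
        + K * Real.exp (K * D.depth t x y) * D.rate)) t := by
  have hdepth : HasDerivAt (fun t => D.depth t x y) D.rate t :=
    ((((((hasDerivAt_id t).sub_const D.t₁).const_mul D.rate).const_add 1).sub_const
      ((x - (D.x₀ + D.ρ)) ^ 2)).sub_const ((y - (D.x₀ - D.ρ)) ^ 2)).congr_deriv (by simp)
  have hexp : HasDerivAt (fun t => -Λ * (t - D.t₁)) (-Λ * 1) t :=
    ((hasDerivAt_id t).sub_const D.t₁).const_mul (-Λ)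
  exact ((hexp.exp.const_mul ε).mul ((hdepth.const_mul K).exp.sub_const 1)).congr_deriv (by ring)

theorem barrier_eq_zero_of_depth_eq_zero {ε K Λ t x y : ℝ} (h : D.depth t x y = 0) :
    D.barrier ε K Λ t x y = 0 := by
  simp [barrier, h]

theorem bounds_of_mem_region_initial {x y : ℝ} (h : (D.t₁, x, y) ∈ D.region) :
    D.x₀ + D.ρ - 1 ≤ x ∧ y ≤ D.x₀ - D.ρ + 1 := by
  have hdepth : 0 ≤ 1 - (x - (D.x₀ + D.ρ)) ^ 2 - (y - (D.x₀ - D.ρ)) ^ 2 := by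
    simpa [depth] using h.2
  have hx := abs_le_of_sq_le_sq (a := x - (D.x₀ + D.ρ)) (b := 1)
    (by linarith [sq_nonneg (y - (D.x₀ - D.ρ))]) zero_le_one
  have hy := abs_le_of_sq_le_sq (a := y - (D.x₀ - D.ρ)) (b := 1)
    (by linarith [sq_nonneg (x - (D.x₀ + D.ρ))]) zero_le_one
  rw [abs_le] at hx hy
  exact ⟨by linarith, by linarith⟩

theorem barrier_initial_le {ε K : ℝ} (hε : 0 ≤ ε) (hK : 0 ≤ K) (Λ x y : ℝ) :
    D.barrier ε K Λ D.t₁ x y ≤ ε * Real.exp K := by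
  have hdepth : D.depth D.t₁ x y ≤ 1 := by
    simp only [depth, sub_self, mul_zero]
    linarith [sq_nonneg (x - (D.x₀ + D.ρ)), sq_nonneg (y - (D.x₀ - D.ρ))]
  have hexp : Real.exp (K * D.depth D.t₁ x y) ≤ Real.exp K :=
    Real.exp_le_exp.2 (mul_le_of_le_one_right hK hdepth)
  simp only [barrier, sub_self, mul_zero, Real.exp_zero, mul_one]
  gcongr
  linarith

theorem depth_final_ge {r : ℝ} (hr : r ∈ Ioo 0 D.ρ) :
    2 * D.ρ * r ≤ D.depth D.t₀ (D.x₀ + r) (D.x₀ - r) := by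
  simp only [depth, D.rate_mul]
  nlinarith [hr.1, hr.2]

theorem linear_le_barrier_final {ε K : ℝ} (hε : 0 ≤ ε) (hK : 0 ≤ K) (Λ : ℝ) {r : ℝ}
    (hr : r ∈ Ioo 0 D.ρ) : ε * Real.exp (-Λ * (D.t₀ - D.t₁)) * (K * (2 * D.ρ)) * r ≤
      D.barrier ε K Λ D.t₀ (D.x₀ + r) (D.x₀ - r) := by
  have hexp := Real.add_one_le_exp (K * D.depth D.t₀ (D.x₀ + r) (D.x₀ - r))
  have hdepth := mul_le_mul_of_nonneg_left (D.depth_final_ge hr) hK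
  rw [barrier, mul_assoc _ _ r]
  gcongr
  linarith

end GrowingDisc

namespace ClassicalFlow

variable {a b : ℝ → ℝ} (S : ClassicalFlow a b)

/-- The coefficient of the density in the nondivergence form of the equation. -/
def drift (t x : ℝ) : ℝ :=
  1 / 2 * derivWithin a (Icc 0 1) (S.cdf t x) * S.dx t x - b (S.cdf t x)

theorem dt_eq_drift {t : ℝ} (ht : 0 < t) (x : ℝ) :
    S.dt t x = 1 / 2 * (a (S.cdf t x) * S.dxx t x) + S.drift t x * S.dx t x := by
  rw [S.dt_eq ht, drift]
  ring

theorem continuousOn_comp_cdf {f : ℝ → ℝ} (hf : ContinuousOn f (Icc 0 1)) :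
    ContinuousOn (fun z : ℝ × ℝ => f (S.cdf z.1 z.2)) (Ioi 0 ×ˢ univ) :=
  hf.comp S.continuousOn_cdf fun _ hz => (S.isCDF hz.1).mem_Icc _

theorem continuousOn_drift (ha' : ContinuousOn (derivWithin a (Icc 0 1)) (Icc 0 1))
    (hb : ContinuousOn b (Icc 0 1)) : ContinuousOn (uncurry S.drift) (Ioi 0 ×ˢ univ) :=
  ((continuousOn_const.mul (S.continuousOn_comp_cdf ha')).mul S.continuousOn_dx).sub
    (S.continuousOn_comp_cdf hb)

theorem exists_abs_drift_le (ha' : ContinuousOn (derivWithin a (Icc 0 1)) (Icc 0 1))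
    (hb : ContinuousOn b (Icc 0 1)) {t₁ : ℝ} (ht₁ : 0 < t₁) (t₀ l r : ℝ) :
    ∃ Γ, 0 ≤ Γ ∧ ∀ t ∈ Icc t₁ t₀, ∀ x ∈ Icc l r, |S.drift t x| ≤ Γ := by
  obtain ⟨Γ, hΓ⟩ := (isCompact_Icc.prod isCompact_Icc : IsCompact (Icc t₁ t₀ ×ˢ Icc l r))
    |>.exists_bound_of_continuousOn ((S.continuousOn_drift ha' hb).mono
      (prod_mono (fun t ht => ht₁.trans_le ht.1) (subset_univ _)))
  exact ⟨|Γ|, abs_nonneg _, fun t ht x hx => (hΓ (t, x) ⟨ht, hx⟩).trans (le_abs_self _)⟩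

/- At such a point `S_t` has the slopes `s_x` at `x` and `-s_y` at `y`. -/
theorem le_time_deriv_of_isLocalMin_doubling {s : ℝ → ℝ → ℝ → ℝ} {sx sy : ℝ → ℝ}
    {t x y st sxx syy : ℝ} (ht : 0 < t) (hax : 0 ≤ a (S.cdf t x)) (hay : 0 ≤ a (S.cdf t y))
    (hst : HasDerivAt (fun t => s t x y) st t)
    (hsx : ∀ x, HasDerivAt (fun x => s t x y) (sx x) x) (hsxx : HasDerivAt sx sxx x)
    (hsy : ∀ y, HasDerivAt (fun y => s t x y) (sy y) y) (hsyy : HasDerivAt sy syy y)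
    (hmint : ∀ᶠ t' in 𝓝[<] t,
      S.cdf t x - S.cdf t y - s t x y ≤ S.cdf t' x - S.cdf t' y - s t' x y)
    (hminx : IsLocalMin (fun x => S.cdf t x - S.cdf t y - s t x y) x)
    (hminy : IsLocalMin (fun y => S.cdf t x - S.cdf t y - s t x y) y) :
    1 / 2 * a (S.cdf t x) * sxx + 1 / 2 * a (S.cdf t y) * syy
      + S.drift t x * sx x + S.drift t y * sy y ≤ st := by
  have hWx : ∀ x, HasDerivAt (fun x => S.cdf t x - S.cdf t y - s t x y) (S.dx t x - sx x) x :=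
    fun x => ((S.hasDerivAt_space ht x).sub_const _).sub (hsx x)
  have hWy : ∀ y, HasDerivAt (fun y => S.cdf t x - S.cdf t y - s t x y) (-S.dx t y - sy y) y :=
    fun y => ((S.hasDerivAt_space ht y).const_sub _).sub (hsy y)
  have hdx : S.dx t x = sx x := sub_eq_zero.1 (hminx.hasDerivAt_eq_zero (hWx x))
  have hdy : S.dx t y = -sy y := by linarith [hminy.hasDerivAt_eq_zero (hWy y)]
  have hxx := mul_nonneg hax
    (second_deriv_nonneg_of_isLocalMin hminx hWx ((S.hasDerivAt_dx ht x).sub hsxx))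
  have hyy := mul_nonneg hay
    (second_deriv_nonneg_of_isLocalMin hminy hWy ((S.hasDerivAt_dx ht y).neg.sub hsyy))
  have htime := deriv_nonpos_of_eventually_le_left
    (((S.hasDerivAt_time ht x).sub (S.hasDerivAt_time ht y)).sub hst) hmint
  rw [S.dt_eq_drift ht, S.dt_eq_drift ht, hdx, hdy] at htime
  linarith

theorem continuousOn_doubling (D : GrowingDisc) (ε K Λ : ℝ) :
    ContinuousOn (fun z : ℝ × ℝ × ℝ => S.cdf z.1 z.2.1 - S.cdf z.1 z.2.2
      - D.barrier ε K Λ z.1 z.2.1 z.2.2) D.region := by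
  have hcdf : ∀ π : ℝ × ℝ × ℝ → ℝ, Continuous π →
      ContinuousOn (fun z => S.cdf z.1 (π z)) D.region := fun π hπ =>
    S.continuousOn_cdf.comp (f := fun z : ℝ × ℝ × ℝ => (z.1, π z)) (by fun_prop)
      fun z hz => ⟨D.pos.trans_le hz.1.1, mem_univ _⟩
  refine ((hcdf _ (by fun_prop)).sub (hcdf _ (by fun_prop))).sub (Continuous.continuousOn ?_)
  have := D.continuous_depth
  unfold GrowingDisc.barrier
  fun_prop

theorem not_isMinOn_doubling_of_depth_pos (D : GrowingDisc) {c C Γ ε K Λ : ℝ} (hc : 0 ≤ c)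
    (hε : 0 < ε) (ha : ∀ u ∈ Icc (0 : ℝ) 1, a u ∈ Icc c C)
    (hΓ : ∀ t ∈ Icc D.t₁ D.t₀, ∀ x ∈ Icc (D.x₀ - 3 * D.ρ) (D.x₀ + 3 * D.ρ), |S.drift t x| ≤ Γ)
    (hKΛ : IsBarrierExponents c (2 * C + 8 * Γ * D.ρ + D.rate) K Λ) {t x y : ℝ}
    (hz : (t, x, y) ∈ D.region) (ht : D.t₁ < t) (hdepth : 0 < D.depth t x y) :
    ¬ IsMinOn (fun z : ℝ × ℝ × ℝ => S.cdf z.1 z.2.1 - S.cdf z.1 z.2.2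
      - D.barrier ε K Λ z.1 z.2.1 z.2.2) D.region (t, x, y) := by
  intro hmin
  have htpos : 0 < t := D.pos.trans ht
  have hmem := D.eventually_mem_region ht hdepth
  have hmint : ∀ᶠ t' in 𝓝[<] t, (t', x, y) ∈ D.region := by
    have h := (Continuous.tendsto (f := fun t' => (t', x, y)) (by fun_prop) t).eventually hmem
    filter_upwards [h.filter_mono nhdsWithin_le_nhds, self_mem_nhdsWithin] with t' h hlt
    exact h ((le_of_lt hlt).trans hz.1.2)
  have hminx : ∀ᶠ x' in 𝓝 x, (t, x', y) ∈ D.region :=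
    ((Continuous.tendsto (f := fun x' => (t, x', y)) (by fun_prop) x).eventually hmem).mono
      fun _ h => h hz.1.2
  have hminy : ∀ᶠ y' in 𝓝 y, (t, x, y') ∈ D.region :=
    ((Continuous.tendsto (f := fun y' => (t, x, y')) (by fun_prop) y).eventually hmem).mono
      fun _ h => h hz.1.2
  have hval : ∀ w, a (S.cdf t w) ∈ Icc c C := fun w => ha _ ((S.isCDF htpos).mem_Icc w)
  have hle := S.le_time_deriv_of_isLocalMin_doubling htpos (hc.trans (hval x).1)
    (hc.trans (hval y).1) (D.hasDerivAt_barrier_time ε K Λ t x y)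
    (fun x => hasDerivAt_const_mul_exp_sub_one _ K (D.hasDerivAt_depth_fst t x y))
    (hasDerivAt_deriv_const_mul_exp_sub_one _ K (D.hasDerivAt_depth_fst t x y))
    (fun y => hasDerivAt_const_mul_exp_sub_one _ K (D.hasDerivAt_depth_snd t x y))
    (hasDerivAt_deriv_const_mul_exp_sub_one _ K (D.hasDerivAt_depth_snd t x y))
    (hmint.mono fun _ h => hmin h) (hminx.mono fun _ h => hmin h) (hminy.mono fun _ h => hmin h)
  obtain ⟨hξ, hη, -⟩ := D.bounds_of_mem_region hz
  obtain ⟨hx, hy⟩ := D.mem_Icc_of_mem_region hz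
  have hlt := mul_lt_mul_of_pos_left (hKΛ.strict_subsolution (hval x) (hval y) (hΓ t hz.1 x hx)
    (hΓ t hz.1 y hy) hξ hη hdepth (by
      have := (D.radius_sq_mem_Icc hz.1).1
      simp only [GrowingDisc.depth]
      linarith)) (mul_pos hε (Real.exp_pos (-Λ * (t - D.t₁))))
  linarith

theorem barrier_le_sub (D : GrowingDisc) {c C Γ ε K Λ : ℝ} (hc : 0 ≤ c) (hε : 0 < ε)
    (ha : ∀ u ∈ Icc (0 : ℝ) 1, a u ∈ Icc c C)
    (hΓ : ∀ t ∈ Icc D.t₁ D.t₀, ∀ x ∈ Icc (D.x₀ - 3 * D.ρ) (D.x₀ + 3 * D.ρ), |S.drift t x| ≤ Γ)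
    (hKΛ : IsBarrierExponents c (2 * C + 8 * Γ * D.ρ + D.rate) K Λ)
    (hinit : ε * Real.exp K ≤
      S.cdf D.t₁ (D.x₀ + D.ρ - 1) - S.cdf D.t₁ (D.x₀ - D.ρ + 1))
    {z : ℝ × ℝ × ℝ} (hz : z ∈ D.region) :
    D.barrier ε K Λ z.1 z.2.1 z.2.2 ≤ S.cdf z.1 z.2.1 - S.cdf z.1 z.2.2 := by
  obtain ⟨⟨t, x, y⟩, hmem, hmin⟩ :=
    D.isCompact_region.exists_isMinOn ⟨z, hz⟩ (S.continuousOn_doubling D ε K Λ)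
  suffices h : D.barrier ε K Λ t x y ≤ S.cdf t x - S.cdf t y by
    have := hmin hz
    simp only [mem_ofPred_eq] at this
    linarith
  rcases hmem.2.eq_or_lt with hdepth | hdepth
  · rw [D.barrier_eq_zero_of_depth_eq_zero hdepth.symm, sub_nonneg]
    exact (S.isCDF (D.pos.trans_le hmem.1.1)).monotone (D.bounds_of_mem_region hmem).2.2
  rcases hmem.1.1.eq_or_lt with ht | ht
  · dsimp only at ht
    subst ht
    obtain ⟨hx, hy⟩ := D.bounds_of_mem_region_initial hmem
    have hmono := (S.isCDF D.pos).monotone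
    linarith [D.barrier_initial_le hε.le hKΛ.1.le Λ x y, hmono hx, hmono hy]
  · exact absurd hmin (S.not_isMinOn_doubling_of_depth_pos D hc hε ha hΓ hKΛ hmem ht hdepth)

theorem exists_cdf_lt_cdf {t : ℝ} (ht : 0 < t) (x : ℝ) :
    ∃ ρ, 1 ≤ ρ ∧ S.cdf t (x - ρ + 1) < S.cdf t (x + ρ - 1) := by
  have hleft : Tendsto (fun ρ : ℝ => x - ρ + 1) atTop atBot :=
    tendsto_atBot_add_const_right _ _ (tendsto_atBot_add_const_left _ x tendsto_neg_atTop_atBot)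
  have hright : Tendsto (fun ρ : ℝ => x + ρ - 1) atTop atTop :=
    tendsto_atTop_add_const_right _ _ (tendsto_atTop_add_const_left _ x tendsto_id)
  obtain ⟨ρ, hρ, hlow, hhigh⟩ := ((eventually_ge_atTop 1).and
    ((((S.isCDF ht).tendsto_atBot.comp hleft).eventually
      (gt_mem_nhds (show (0 : ℝ) < 1 / 2 by norm_num))).and
    (((S.isCDF ht).tendsto_atTop.comp hright).eventually
      (lt_mem_nhds (show (1 / 2 : ℝ) < 1 by norm_num))))).exists
  exact ⟨ρ, hρ, hlow.trans hhigh⟩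

/- Hopf's lemma applied to `F_t(x) - F_t(y)` on `{y ≤ x}`, which vanishes on the diagonal. -/
theorem dx_pos {c : ℝ} (hc : 0 < c) (hac : ∀ u ∈ Icc (0 : ℝ) 1, c ≤ a u)
    (ha : ContinuousOn a (Icc 0 1)) (ha' : ContinuousOn (derivWithin a (Icc 0 1)) (Icc 0 1))
    (hb : ContinuousOn b (Icc 0 1)) {t : ℝ} (ht : 0 < t) (x : ℝ) : 0 < S.dx t x := by
  obtain ⟨C, hC⟩ := isCompact_Icc.exists_bound_of_continuousOn ha
  have haC : ∀ u ∈ Icc (0 : ℝ) 1, a u ∈ Icc c C := fun u hu =>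
    ⟨hac u hu, (le_abs_self _).trans (hC u hu)⟩
  have hC0 : 0 ≤ C := (norm_nonneg _).trans (hC 0 ⟨le_rfl, zero_le_one⟩)
  obtain ⟨ρ, hρ, hgap⟩ := S.exists_cdf_lt_cdf (half_pos ht) x
  let D : GrowingDisc := ⟨t / 2, t, x, ρ, half_pos ht, half_lt_self ht, hρ⟩
  have hρ0 : 0 < ρ := D.ρ_pos
  obtain ⟨Γ, hΓ0, hΓ⟩ :=
    S.exists_abs_drift_le ha' hb (half_pos ht) t (x - 3 * ρ) (x + 3 * ρ)
  have hrate := D.rate_nonneg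
  obtain ⟨K, Λ, hKΛ⟩ := exists_isBarrierExponents (M := 2 * C + 8 * Γ * ρ + D.rate) hc
    (by positivity)
  have hK := hKΛ.1
  set ε := (S.cdf (t / 2) (x + ρ - 1) - S.cdf (t / 2) (x - ρ + 1)) / Real.exp K
  have hε0 : 0 < ε := div_pos (sub_pos.2 hgap) (Real.exp_pos K)
  refine deriv_pos_of_linear_le_symm_sub (S.hasDerivAt_space ht x)
    (κ := ε * Real.exp (-Λ * (t - t / 2)) * (K * (2 * ρ))) (by positivity) hρ0 fun r hr => ?_
  have hmem : (t, x + r, x - r) ∈ D.region :=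
    ⟨⟨(half_lt_self ht).le, le_rfl⟩, le_trans (by have := hr.1; positivity) (D.depth_final_ge hr)⟩
  exact (D.linear_le_barrier_final hε0.le hK.le Λ hr).trans
    (S.barrier_le_sub D hc.le hε0 haC hΓ hKΛ (div_mul_cancel₀ _ (Real.exp_pos K).ne').le hmem)

end ClassicalFlow

/-! ### Quantile functions -/

namespace IsCDF

variable {f : ℝ → ℝ} (hf : IsCDF f)
include hf

theorem mem_Ioo (hm : StrictMono f) (x : ℝ) : f x ∈ Ioo (0 : ℝ) 1 :=
  ⟨(hf.mem_Icc (x - 1)).1.trans_lt (hm (sub_one_lt x)),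
    (hm (lt_add_one x)).trans_le (hf.mem_Icc (x + 1)).2⟩

theorem exists_eq (hc : Continuous f) {u : ℝ} (hu : u ∈ Ioo (0 : ℝ) 1) : ∃ x, f x = u := by
  obtain ⟨x, hx⟩ := (hf.tendsto_atBot.eventually (gt_mem_nhds hu.1)).exists
  obtain ⟨y, hy⟩ := (hf.tendsto_atTop.eventually (lt_mem_nhds hu.2)).exists
  exact mem_range_of_exists_le_of_exists_ge hc ⟨x, hx.le⟩ ⟨y, hy.le⟩

end IsCDF

theorem pinv_apply {f : ℝ → ℝ} (hm : StrictMono f) (x : ℝ) : pinv f (f x) = x := by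
  have hset : {y : ℝ | f x < f y} = Ioi x := by
    ext y
    exact hm.lt_iff_lt
  rw [pinv, hset, csInf_Ioi]

theorem IsCDF.apply_pinv {f : ℝ → ℝ} (hf : IsCDF f) (hm : StrictMono f) (hc : Continuous f)
    {u : ℝ} (hu : u ∈ Ioo (0 : ℝ) 1) : f (pinv f u) = u := by
  obtain ⟨x, rfl⟩ := hf.exists_eq hc hu
  rw [pinv_apply hm]

/- The triangular map `(s, x) ↦ (s, f s x)` sends `(s, γ s)` to `(s, c)`, and its derivative at
`(t, γ t)` is invertible. -/
theorem hasDerivAt_of_apply_eq_const {f f₁ f₂ : ℝ → ℝ → ℝ} {γ : ℝ → ℝ} {t c : ℝ}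
    (hf₁ : ∀ᶠ z : ℝ × ℝ in 𝓝 (t, γ t), HasDerivAt (fun s => f s z.2) (f₁ z.1 z.2) z.1)
    (hf₂ : ∀ᶠ z : ℝ × ℝ in 𝓝 (t, γ t), HasDerivAt (f z.1) (f₂ z.1 z.2) z.2)
    (hc₁ : ContinuousAt (uncurry f₁) (t, γ t)) (hc₂ : ContinuousAt (uncurry f₂) (t, γ t))
    (h₀ : f₂ t (γ t) ≠ 0) (hγ : ContinuousAt γ t) (hfγ : ∀ᶠ s in 𝓝 t, f s (γ s) = c) :
    HasDerivAt γ (-(f₁ t (γ t) / f₂ t (γ t))) t := by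
  let L : ℝ → ℝ →L[ℝ] ℝ := ContinuousLinearMap.toSpanSingleton ℝ
  have hL : Continuous L := (ContinuousLinearMap.toSpanSingletonCLE (𝕜 := ℝ) (E := ℝ)).continuous
  have htotal : HasFDerivAt (uncurry f)
      ((L (f₁ t (γ t))).coprod (L (f₂ t (γ t)))) (t, γ t) :=
    (hasStrictFDerivAt_uncurry_coprod (f₁ := fun s x => L (f₁ s x)) (f₂ := fun s x => L (f₂ s x))
      (hf₁.mono fun _ h => h.hasFDerivAt) (hf₂.mono fun _ h => h.hasFDerivAt)
      (hL.continuousAt.comp hc₁) (hL.continuousAt.comp hc₂)).hasFDerivAt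
  have htri := (hasFDerivAt_fst (𝕜 := ℝ) (p := (t, γ t))).prodMk htotal
  let inv : ℝ × ℝ →L[ℝ] ℝ × ℝ := (ContinuousLinearMap.fst ℝ ℝ ℝ).prod
    ((f₂ t (γ t))⁻¹ • (ContinuousLinearMap.snd ℝ ℝ ℝ - f₁ t (γ t) • ContinuousLinearMap.fst ℝ ℝ ℝ))
  have hcurve : HasFDerivAt (fun s => (s, γ s)) _ t :=
    htri.of_comp_of_leftInverse (f'symm := inv) (g := fun s => (s, γ s))
      (continuousAt_id.prodMk hγ) ((hasFDerivAt_id t).prodMk (hasFDerivAt_const c t))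
      (hfγ.mono fun s hs => by simp [hs])
      (fun z => by ext <;> simp [inv, L]; field_simp; ring)
  refine hcurve.snd.hasDerivAt.congr_deriv ?_
  simp [inv]
  field_simp

/-- A classical solution whose density is everywhere positive. -/
structure PositiveFlow (a b : ℝ → ℝ) extends ClassicalFlow a b where
  dx_pos : ∀ {t : ℝ}, 0 < t → ∀ x, 0 < dx t x

namespace PositiveFlow

variable {a b : ℝ → ℝ} (S : PositiveFlow a b)

/-- The quantile function `u ↦ F_t⁻¹(u)` of the solution. -/
def quantile (t u : ℝ) : ℝ := pinv (S.cdf t) u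

theorem strictMono_cdf {t : ℝ} (ht : 0 < t) : StrictMono (S.cdf t) :=
  strictMono_of_hasDerivAt_pos (S.hasDerivAt_space ht) (S.dx_pos ht)

theorem cdf_mem_Ioo {t : ℝ} (ht : 0 < t) (x : ℝ) : S.cdf t x ∈ Ioo (0 : ℝ) 1 :=
  (S.isCDF ht).mem_Ioo (S.strictMono_cdf ht) x

theorem cdf_quantile {t : ℝ} (ht : 0 < t) {u : ℝ} (hu : u ∈ Ioo (0 : ℝ) 1) :
    S.cdf t (S.quantile t u) = u :=
  (S.isCDF ht).apply_pinv (S.strictMono_cdf ht)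
    (continuous_iff_continuousAt.2 fun x => (S.hasDerivAt_space ht x).continuousAt) hu

theorem quantile_lt_iff {t u x : ℝ} (ht : 0 < t) (hu : u ∈ Ioo (0 : ℝ) 1) :
    S.quantile t u < x ↔ u < S.cdf t x := by
  rw [← (S.strictMono_cdf ht).lt_iff_lt, S.cdf_quantile ht hu]

theorem lt_quantile_iff {t u x : ℝ} (ht : 0 < t) (hu : u ∈ Ioo (0 : ℝ) 1) :
    x < S.quantile t u ↔ S.cdf t x < u := by
  rw [← (S.strictMono_cdf ht).lt_iff_lt, S.cdf_quantile ht hu]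

theorem continuousOn_quantile :
    ContinuousOn (uncurry S.quantile) (Ioi 0 ×ˢ Ioo 0 1) := by
  rintro ⟨t, u⟩ ⟨ht : 0 < t, hu : u ∈ Ioo (0 : ℝ) 1⟩
  have hgap : ∀ x, Tendsto (fun q : ℝ × ℝ => q.2 - S.cdf q.1 x) (𝓝[Ioi 0 ×ˢ Ioo 0 1] (t, u))
      (𝓝 (u - S.cdf t x)) := fun x =>
    (continuousAt_snd.sub (ContinuousAt.comp (f := Prod.fst) (x := (t, u))
      (S.hasDerivAt_time ht x).continuousAt continuousAt_fst)).continuousWithinAt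
  refine tendsto_order.2 ⟨fun x hx => ?_, fun x hx => ?_⟩
  · filter_upwards [(hgap x).eventually_const_lt (sub_pos.2 ((S.lt_quantile_iff ht hu).1 hx)),
      self_mem_nhdsWithin] with q hq hmem
    exact (S.lt_quantile_iff hmem.1 hmem.2).2 (sub_pos.1 hq)
  · filter_upwards [(hgap x).eventually_lt_const (sub_neg.2 ((S.quantile_lt_iff ht hu).1 hx)),
      self_mem_nhdsWithin] with q hq hmem
    exact (S.quantile_lt_iff hmem.1 hmem.2).2 (sub_neg.1 hq)

theorem continuousOn_comp_quantile {h : ℝ → ℝ → ℝ}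
    (hh : ContinuousOn (uncurry h) (Ioi 0 ×ˢ univ)) :
    ContinuousOn (fun q : ℝ × ℝ => h q.1 (S.quantile q.1 q.2)) (Ioi 0 ×ˢ Ioo 0 1) :=
  hh.comp (continuousOn_fst.prodMk S.continuousOn_quantile) fun _ hq => ⟨hq.1, mem_univ _⟩

/-- The density-quantile function `u ↦ ∂ₓF_t(F_t⁻¹(u))`, which is `1 / ∂ᵤF_t⁻¹(u)`. -/
def densityQuantile (t u : ℝ) : ℝ := S.dx t (S.quantile t u)

/-- The velocity `∂ₜF_t⁻¹(u)` of the quantile. -/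
def velocity (t u : ℝ) : ℝ := -(S.dt t (S.quantile t u) / S.densityQuantile t u)

theorem densityQuantile_pos {t : ℝ} (ht : 0 < t) (u : ℝ) : 0 < S.densityQuantile t u :=
  S.dx_pos ht _

theorem continuousOn_densityQuantile :
    ContinuousOn (uncurry S.densityQuantile) (Ioi 0 ×ˢ Ioo 0 1) :=
  S.continuousOn_comp_quantile S.continuousOn_dx

theorem continuousOn_velocity : ContinuousOn (uncurry S.velocity) (Ioi 0 ×ˢ Ioo 0 1) :=
  ((S.continuousOn_comp_quantile S.continuousOn_dt).div S.continuousOn_densityQuantile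
    fun q hq => (S.densityQuantile_pos hq.1 q.2).ne').neg

theorem hasDerivAt_quantile {t : ℝ} (ht : 0 < t) {u : ℝ} (hu : u ∈ Ioo (0 : ℝ) 1) :
    HasDerivAt (S.quantile t) (S.densityQuantile t u)⁻¹ u := by
  refine HasDerivAt.of_local_left_inverse ?_ (S.hasDerivAt_space ht _) (S.dx_pos ht _).ne' ?_
  · exact (S.continuousOn_quantile.uncurry_left t ht).continuousAt (isOpen_Ioo.mem_nhds hu)
  · filter_upwards [isOpen_Ioo.mem_nhds hu] with v hv using S.cdf_quantile ht hv

theorem hasDerivAt_quantile_time {t : ℝ} (ht : 0 < t) {u : ℝ} (hu : u ∈ Ioo (0 : ℝ) 1) :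
    HasDerivAt (fun s => S.quantile s u) (S.velocity t u) t := by
  have hnhds : Ioi (0 : ℝ) ×ˢ univ ∈ 𝓝 (t, S.quantile t u) :=
    (isOpen_Ioi.prod isOpen_univ).mem_nhds ⟨ht, mem_univ _⟩
  refine hasDerivAt_of_apply_eq_const (f := S.cdf) (c := u) ?_ ?_
    (S.continuousOn_dt.continuousAt hnhds) (S.continuousOn_dx.continuousAt hnhds)
    (S.dx_pos ht _).ne' ?_ ?_
  · filter_upwards [hnhds] with z hz using S.hasDerivAt_time hz.1 _
  · filter_upwards [hnhds] with z hz using S.hasDerivAt_space hz.1 _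
  · exact (S.continuousOn_quantile.uncurry_right u hu).continuousAt (Ioi_mem_nhds ht)
  · filter_upwards [Ioi_mem_nhds ht] with s hs using S.cdf_quantile hs hu

/- The equation of the quantile function: `∂ₜX = b(u) - (1/2) ∂ᵤ(a(u) / ∂ᵤX)`. -/
theorem hasDerivAt_mul_densityQuantile (ha : DifferentiableOn ℝ a (Icc 0 1)) {t : ℝ} (ht : 0 < t)
    {u : ℝ} (hu : u ∈ Ioo (0 : ℝ) 1) :
    HasDerivAt (fun v => a v * S.densityQuantile t v) (2 * (b u - S.velocity t u)) u := by
  refine ((hasDerivAt_derivWithin_Icc ha hu).mul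
    ((S.hasDerivAt_dx ht _).comp u (S.hasDerivAt_quantile ht hu))).congr_deriv ?_
  have hpos := S.dx_pos ht (S.quantile t u)
  have heq := S.dt_eq ht (S.quantile t u)
  rw [S.cdf_quantile ht hu] at heq
  simp only [velocity, densityQuantile, comp_apply, heq]
  field_simp
  ring

end PositiveFlow

/-! ### The energy identity for truncated quantiles -/

theorem continuous_abs_rpow_sub_two {p : ℝ} (hp : 2 ≤ p) :
    Continuous fun w : ℝ => |w| ^ (p - 2) :=
  continuous_abs.rpow_const fun _ => Or.inr (sub_nonneg.2 hp)

theorem hasDerivAt_abs_rpow_sub_two_mul_self {p : ℝ} (hp : 2 ≤ p) (w : ℝ) :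
    HasDerivAt (fun w : ℝ => |w| ^ (p - 2) * w) ((p - 1) * |w| ^ (p - 2)) w := by
  have hcont := continuous_abs_rpow_sub_two hp
  refine hasDerivAt_of_hasDerivAt_of_ne' (x := 0) (g := fun w => (p - 1) * |w| ^ (p - 2))
    (fun y hy => ?_) (hcont.mul continuous_id).continuousAt
    (continuous_const.mul hcont).continuousAt w
  have habs : 0 < |y| := abs_pos.2 hy
  refine (((hasDerivAt_abs hy).rpow_const (p := p - 2) (Or.inl habs.ne')).mul
    (hasDerivAt_id y)).congr_deriv ?_
  have hpow : |y| ^ (p - 2) = |y| ^ (p - 2 - 1) * |y| := by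
    rw [← Real.rpow_add_one habs.ne', sub_add_cancel]
  rw [id, hpow]
  linear_combination (p - 2) * |y| ^ (p - 2 - 1) * sign_mul_self y

theorem integral_sub_eq_integral_of_balance_law {w D S J : ℝ → ℝ → ℝ} {t₁ t₂ α β : ℝ}
    (h12 : t₁ ≤ t₂) (hαβ : α ≤ β)
    (hw : ∀ t ∈ Icc t₁ t₂, ∀ u ∈ Icc α β, HasDerivAt (fun s => w s u) (D t u) t)
    (hJ : ∀ t ∈ Icc t₁ t₂, ∀ u ∈ Icc α β, HasDerivAt (J t) (D t u - S t u) u)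
    (hD : ContinuousOn (uncurry D) (Icc t₁ t₂ ×ˢ Icc α β))
    (hS : ContinuousOn (uncurry S) (Icc t₁ t₂ ×ˢ Icc α β))
    (hJ₀ : ∀ t ∈ Icc t₁ t₂, J t α = J t β) :
    ∫ u in α..β, (w t₂ u - w t₁ u) = ∫ t in t₁..t₂, ∫ u in α..β, S t u := by
  rw [← uIcc_of_le h12, ← uIcc_of_le hαβ] at *
  have hspace : ∀ {k : ℝ → ℝ → ℝ}, ContinuousOn (uncurry k) (uIcc t₁ t₂ ×ˢ uIcc α β) →
      ∀ t ∈ uIcc t₁ t₂, IntervalIntegrable (k t) volume α β := fun hk t ht =>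
    (hk.uncurry_left t ht).intervalIntegrable
  calc ∫ u in α..β, (w t₂ u - w t₁ u) = ∫ u in α..β, ∫ t in t₁..t₂, D t u :=
        intervalIntegral.integral_congr fun u hu =>
          (intervalIntegral.integral_eq_sub_of_hasDerivAt (fun t ht => hw t ht u hu)
            (hD.uncurry_right u hu).intervalIntegrable).symm
    _ = ∫ t in t₁..t₂, ∫ u in α..β, D t u :=
        (intervalIntegral_intervalIntegral_swap (F := D)
          ((hD.integrableOn_compact (isCompact_uIcc.prod isCompact_uIcc)).mono_set
            (prod_mono uIoc_subset_uIcc uIoc_subset_uIcc))).symm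
    _ = ∫ t in t₁..t₂, ∫ u in α..β, S t u :=
        intervalIntegral.integral_congr fun t ht => by
          have hflux := intervalIntegral.integral_eq_sub_of_hasDerivAt (hJ t ht)
            ((hspace hD t ht).sub (hspace hS t ht))
          rw [intervalIntegral.integral_sub (hspace hD t ht) (hspace hS t ht), hJ₀ t ht,
            sub_self] at hflux
          exact sub_eq_zero.1 hflux

theorem setIntegral_Ioo_eq_intervalIntegral {k : ℝ → ℝ} {a b α β : ℝ} (hα : a < α)
    (hαβ : α ≤ β) (hβ : β < b) (hk : ∀ u ∈ Ioo a b, u ∉ Ioo α β → k u = 0) :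
    ∫ u in Ioo a b, k u = ∫ u in α..β, k u := by
  rw [intervalIntegral.integral_of_le hαβ, integral_Ioc_eq_integral_Ioo]
  exact setIntegral_eq_of_subset_of_forall_sdiff_eq_zero measurableSet_Ioo
    (Ioo_subset_Ioo hα.le hβ.le) fun u hu => hk u hu.1 hu.2

section Slab

variable {k : ℝ → ℝ → ℝ} {t₁ t₂ a b α β : ℝ}

theorem integrableOn_slab (hk : ContinuousOn (uncurry k) (Icc t₁ t₂ ×ˢ Icc α β))
    (hz : ∀ t ∈ Icc t₁ t₂, ∀ u ∈ Ioo a b, u ∉ Ioo α β → k t u = 0) :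
    IntegrableOn (uncurry k) (Ioc t₁ t₂ ×ˢ Ioo a b) := by
  refine (hk.integrableOn_compact (isCompact_Icc.prod isCompact_Icc)).of_forall_sdiff_eq_zero
    (measurableSet_Ioc.prod measurableSet_Ioo) ?_
  rintro ⟨t, u⟩ ⟨⟨ht, hu⟩, hout⟩
  exact hz t (Ioc_subset_Icc_self ht) u hu fun hin =>
    hout ⟨Ioc_subset_Icc_self ht, Ioo_subset_Icc_self hin⟩

theorem setIntegral_slab_eq (h12 : t₁ ≤ t₂) (hα : a < α) (hαβ : α ≤ β) (hβ : β < b)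
    (hk : IntegrableOn (uncurry k) (Ioc t₁ t₂ ×ˢ Ioo a b))
    (hz : ∀ t ∈ Icc t₁ t₂, ∀ u ∈ Ioo a b, u ∉ Ioo α β → k t u = 0) :
    ∫ q in Ioc t₁ t₂ ×ˢ Ioo a b, uncurry k q = ∫ t in t₁..t₂, ∫ u in α..β, k t u := by
  rw [Measure.volume_eq_prod] at hk ⊢
  rw [setIntegral_prod _ hk, intervalIntegral.integral_of_le h12]
  exact setIntegral_congr_fun measurableSet_Ioc fun t ht =>
    setIntegral_Ioo_eq_intervalIntegral hα hαβ hβ (hz t (Ioc_subset_Icc_self ht))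

end Slab

/-- A `C²` function that is constant near `+∞` and near `-∞`; it truncates the quantiles. -/
structure IsTruncation (T : ℝ → ℝ) : Prop where
  contDiff : ContDiff ℝ 2 T
  hasCompactSupport_deriv : HasCompactSupport (deriv T)

namespace IsTruncation

variable {T : ℝ → ℝ} (hT : IsTruncation T)
include hT

theorem hasDerivAt (x : ℝ) : HasDerivAt T (deriv T x) x :=
  (hT.contDiff.differentiable two_ne_zero x).hasDerivAt

theorem contDiff_deriv : ContDiff ℝ 1 (deriv T) :=
  ((contDiff_succ_iff_deriv (n := 1)).1 hT.contDiff).2.2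

theorem hasDerivAt_deriv (x : ℝ) : HasDerivAt (deriv T) (deriv (deriv T) x) x :=
  (hT.contDiff_deriv.differentiable one_ne_zero x).hasDerivAt

theorem continuous_deriv_deriv : Continuous (deriv (deriv T)) :=
  hT.contDiff_deriv.continuous_deriv le_rfl

/- `x` and `y` lie on the same side of the support of `T'`. -/
theorem exists_radius : ∃ L, ∀ x y, (x ≤ -L ∧ y ≤ -L) ∨ (L ≤ x ∧ L ≤ y) →
    T x = T y ∧ deriv T x = 0 ∧ deriv T y = 0 := by
  obtain ⟨L, -, hzero⟩ := hT.hasCompactSupport_deriv.exists_pos_le_norm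
  have hconst : ∀ {s : Set ℝ}, Convex ℝ s → (∀ z ∈ s, L ≤ ‖z‖) → ∀ x ∈ s, ∀ y ∈ s,
      T x = T y ∧ deriv T x = 0 ∧ deriv T y = 0 := fun hs hsL x hx y hy =>
    ⟨by
      have h := hs.norm_image_sub_le_of_norm_hasDerivWithin_le (f := T) (C := 0)
        (fun z _ => (hT.hasDerivAt z).hasDerivWithinAt)
        (fun z hz => (norm_eq_zero.2 (hzero z (hsL z hz))).le) hy hx
      rw [zero_mul] at h
      exact sub_eq_zero.1 (norm_le_zero_iff.1 h),
      hzero x (hsL x hx), hzero y (hsL y hy)⟩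
  refine ⟨L, fun x y hxy => ?_⟩
  rcases hxy with ⟨hx, hy⟩ | ⟨hx, hy⟩
  · exact hconst (convex_Iic (-L)) (fun z hz => le_abs.2 (Or.inr (le_neg.1 hz))) x hx y hy
  · exact hconst (convex_Ici L) (fun z hz => le_abs.2 (Or.inl hz)) x hx y hy

end IsTruncation

section TruncatedQuantities

variable {a b : ℝ → ℝ} (F G : PositiveFlow a b) (p : ℝ) (T : ℝ → ℝ)

/-- The gap `T(F_t⁻¹(u)) - T(G_t⁻¹(u))` between the quantiles truncated by `T`. -/
def truncGap (t u : ℝ) : ℝ := T (F.quantile t u) - T (G.quantile t u)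

/-- The truncated energy `∫₀¹ |T(F_t⁻¹(u)) - T(G_t⁻¹(u))|^p du`. -/
def truncEnergy (t : ℝ) : ℝ := ∫ u in Ioo (0 : ℝ) 1, |truncGap F G T t u| ^ p

/-- The density of dissipation of the truncated energy; the dissipation of the theorem is recovered
for `T = id`, the density-quantile functions being the inverses of `∂ᵤF_t⁻¹` and `∂ᵤG_t⁻¹`. -/
def truncDissipation (t u : ℝ) : ℝ :=
  a u * |truncGap F G T t u| ^ (p - 2) *
    (deriv T (F.quantile t u) * deriv T (G.quantile t u)) *
    ((F.densityQuantile t u - G.densityQuantile t u) ^ 2 /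
      (F.densityQuantile t u * G.densityQuantile t u))

/-- The source of truncated energy coming from the points where `T` is not a translation. -/
def truncError (t u : ℝ) : ℝ :=
  p * (|truncGap F G T t u| ^ (p - 2) * truncGap F G T t u) *
      (truncGap F G (deriv T) t u * b u + 1 / 2 * truncGap F G (deriv (deriv T)) t u * a u)
    + p * (p - 1) / 2 * |truncGap F G T t u| ^ (p - 2) * truncGap F G (deriv T) t u ^ 2 * a u

/-- The net source of truncated energy. -/
def truncSource (t u : ℝ) : ℝ :=
  truncError F G p T t u - p * (p - 1) / 2 * truncDissipation F G p T t u

/-- The time derivative of `|T(F_t⁻¹(u)) - T(G_t⁻¹(u))|^p`. -/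
def truncRate (t u : ℝ) : ℝ :=
  p * |truncGap F G T t u| ^ (p - 2) * truncGap F G T t u *
    (deriv T (F.quantile t u) * F.velocity t u - deriv T (G.quantile t u) * G.velocity t u)

/-- The flux of truncated energy in the variable `u`. -/
def truncFlux (t u : ℝ) : ℝ :=
  -(p / 2) * (|truncGap F G T t u| ^ (p - 2) * truncGap F G T t u) *
    (deriv T (F.quantile t u) * (a u * F.densityQuantile t u) -
      deriv T (G.quantile t u) * (a u * G.densityQuantile t u))

variable {F G p T}

theorem continuousOn_truncGap (hT : Continuous T) :
    ContinuousOn (uncurry (truncGap F G T)) (Ioi 0 ×ˢ Ioo 0 1) :=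
  (hT.comp_continuousOn F.continuousOn_quantile).sub
    (hT.comp_continuousOn G.continuousOn_quantile)

theorem continuousOn_abs_truncGap_rpow (hT : Continuous T) {q : ℝ} (hq : 0 ≤ q) :
    ContinuousOn (fun z : ℝ × ℝ => |truncGap F G T z.1 z.2| ^ q) (Ioi 0 ×ˢ Ioo 0 1) :=
  (continuousOn_truncGap hT).abs.rpow_const fun _ _ => Or.inr hq

theorem continuousOn_comp_snd {f : ℝ → ℝ} (hf : ContinuousOn f (Icc 0 1)) :
    ContinuousOn (fun q : ℝ × ℝ => f q.2) (Ioi 0 ×ˢ Ioo 0 1) :=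
  hf.comp continuousOn_snd fun _ hq => Ioo_subset_Icc_self hq.2

variable (hT : IsTruncation T)
include hT

theorem continuousOn_truncDissipation (hp : 2 ≤ p) (ha : ContinuousOn a (Icc 0 1)) :
    ContinuousOn (uncurry (truncDissipation F G p T)) (Ioi 0 ×ˢ Ioo 0 1) := by
  have hT' := hT.contDiff_deriv.continuous
  exact (((continuousOn_comp_snd ha).mul
    (continuousOn_abs_truncGap_rpow hT.contDiff.continuous (sub_nonneg.2 hp))).mul
    ((hT'.comp_continuousOn F.continuousOn_quantile).mul
      (hT'.comp_continuousOn G.continuousOn_quantile))).mul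
    (((F.continuousOn_densityQuantile.sub G.continuousOn_densityQuantile).pow 2).div
      (F.continuousOn_densityQuantile.mul G.continuousOn_densityQuantile)
      fun q hq => (mul_pos (F.densityQuantile_pos hq.1 _) (G.densityQuantile_pos hq.1 _)).ne')

theorem continuousOn_truncError (hp : 2 ≤ p) (ha : ContinuousOn a (Icc 0 1))
    (hb : ContinuousOn b (Icc 0 1)) :
    ContinuousOn (uncurry (truncError F G p T)) (Ioi 0 ×ˢ Ioo 0 1) := by
  have hgap := continuousOn_truncGap (F := F) (G := G) hT.contDiff.continuous
  have hgap' := continuousOn_truncGap (F := F) (G := G) hT.contDiff_deriv.continuous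
  have hgap'' := continuousOn_truncGap (F := F) (G := G) hT.continuous_deriv_deriv
  have hpow := continuousOn_abs_truncGap_rpow (F := F) (G := G) hT.contDiff.continuous
    (sub_nonneg.2 hp)
  have ha' := continuousOn_comp_snd ha
  exact ((continuousOn_const.mul (hpow.mul hgap)).mul
    ((hgap'.mul (continuousOn_comp_snd hb)).add ((continuousOn_const.mul hgap'').mul ha'))).add
    (((continuousOn_const.mul hpow).mul (hgap'.pow 2)).mul ha')

theorem continuousOn_truncRate (hp : 2 ≤ p) :
    ContinuousOn (uncurry (truncRate F G p T)) (Ioi 0 ×ˢ Ioo 0 1) := by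
  have hT' := hT.contDiff_deriv.continuous
  exact ((continuousOn_const.mul (continuousOn_abs_truncGap_rpow hT.contDiff.continuous
    (sub_nonneg.2 hp))).mul (continuousOn_truncGap hT.contDiff.continuous)).mul
    (((hT'.comp_continuousOn F.continuousOn_quantile).mul F.continuousOn_velocity).sub
      ((hT'.comp_continuousOn G.continuousOn_quantile).mul G.continuousOn_velocity))

theorem hasDerivAt_abs_truncGap_rpow (hp : 1 < p) {t u : ℝ} (ht : 0 < t)
    (hu : u ∈ Ioo (0 : ℝ) 1) :
    HasDerivAt (fun s => |truncGap F G T s u| ^ p) (truncRate F G p T t u) t := by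
  have hgap : HasDerivAt (fun s => truncGap F G T s u) _ t :=
    ((hT.hasDerivAt _).comp t (F.hasDerivAt_quantile_time ht hu)).sub
      ((hT.hasDerivAt _).comp t (G.hasDerivAt_quantile_time ht hu))
  exact (hasDerivAt_abs_rpow (truncGap F G T t u) hp).comp t hgap

theorem hasDerivAt_truncFlux (hp : 2 ≤ p) (ha : DifferentiableOn ℝ a (Icc 0 1)) {t u : ℝ}
    (ht : 0 < t) (hu : u ∈ Ioo (0 : ℝ) 1) :
    HasDerivAt (truncFlux F G p T t)
      (truncRate F G p T t u - truncSource F G p T t u) u := by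
  have hX := F.hasDerivAt_quantile ht hu
  have hY := G.hasDerivAt_quantile ht hu
  have hgap : HasDerivAt (truncGap F G T t) _ u :=
    ((hT.hasDerivAt _).comp u hX).sub ((hT.hasDerivAt _).comp u hY)
  have hpow := ((hasDerivAt_abs_rpow_sub_two_mul_self hp _).comp u hgap).const_mul (-(p / 2))
  have hdiff := (((hT.hasDerivAt_deriv _).comp u hX).mul
      (F.hasDerivAt_mul_densityQuantile ha ht hu)).sub
    (((hT.hasDerivAt_deriv _).comp u hY).mul (G.hasDerivAt_mul_densityQuantile ha ht hu))
  refine (hpow.mul hdiff).congr_deriv ?_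
  have hf := (F.densityQuantile_pos ht u).ne'
  have hg := (G.densityQuantile_pos ht u).ne'
  have hgap' : truncGap F G (deriv T) t u = deriv T (F.quantile t u) - deriv T (G.quantile t u) :=
    rfl
  have hgap'' : truncGap F G (deriv (deriv T)) t u =
    deriv (deriv T) (F.quantile t u) - deriv (deriv T) (G.quantile t u) := rfl
  simp only [truncRate, truncSource, truncError, truncDissipation, comp_apply, Pi.sub_apply,
    Pi.mul_apply, hgap', hgap'']
  field_simp
  ring

omit hT in
theorem PositiveFlow.eventually_le_quantile (S : PositiveFlow a b) {t₁ t₂ : ℝ} (h1 : 0 < t₁)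
    (L : ℝ) : ∀ᶠ ε in 𝓝[>] (0 : ℝ), ∀ t ∈ Icc t₁ t₂, ∀ u ∈ Ioo (0 : ℝ) 1,
      (u ≤ ε → S.quantile t u ≤ -L) ∧ (1 - ε ≤ u → L ≤ S.quantile t u) := by
  have hcont : ∀ x, ContinuousOn (fun t => S.cdf t x) (Icc t₁ t₂) := fun x t ht =>
    (S.hasDerivAt_time (h1.trans_le ht.1) x).continuousAt.continuousWithinAt
  obtain ⟨δ, hδ, hδle⟩ := isCompact_Icc.exists_forall_le' (hcont (-L))
    fun t ht => (S.cdf_mem_Ioo (h1.trans_le ht.1) _).1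
  obtain ⟨δ', hδ', hδle'⟩ := isCompact_Icc.exists_forall_le'
    (continuousOn_const.sub (hcont L) : ContinuousOn (fun t => 1 - S.cdf t L) _)
    fun t ht => sub_pos.2 (S.cdf_mem_Ioo (h1.trans_le ht.1) _).2
  filter_upwards [Ioo_mem_nhdsGT hδ, Ioo_mem_nhdsGT hδ'] with ε hε hε' t ht u hu
  have ht₀ := h1.trans_le ht.1
  refine ⟨fun h => ?_, fun h => ?_⟩
  · exact ((S.quantile_lt_iff ht₀ hu).2 ((h.trans_lt hε.2).trans_le (hδle t ht))).le
  · have hgap : δ' ≤ 1 - S.cdf t L := hδle' t ht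
    exact ((S.lt_quantile_iff ht₀ hu).2 (by linarith [hε'.2])).le

theorem exists_truncGap_eq_zero {t₁ : ℝ} (h1 : 0 < t₁) (t₂ : ℝ) :
    ∃ α β, 0 < α ∧ α ≤ β ∧ β < 1 ∧ ∀ t ∈ Icc t₁ t₂, ∀ u ∈ Ioo (0 : ℝ) 1, u ∉ Ioo α β →
      truncGap F G T t u = 0 ∧ deriv T (F.quantile t u) = 0 ∧ deriv T (G.quantile t u) = 0 := by
  obtain ⟨L, hL⟩ := hT.exists_radius
  obtain ⟨ε, ⟨hF, hG⟩, hε⟩ := ((F.eventually_le_quantile (t₂ := t₂) h1 L).and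
    (G.eventually_le_quantile h1 L)).and (Ioo_mem_nhdsGT (half_pos one_pos)) |>.exists
  refine ⟨ε, 1 - ε, hε.1, by linarith [hε.2], by linarith [hε.1], fun t ht u hu hout => ?_⟩
  have hside : (F.quantile t u ≤ -L ∧ G.quantile t u ≤ -L) ∨
      (L ≤ F.quantile t u ∧ L ≤ G.quantile t u) := by
    rcases le_or_gt u ε with hlow | hlow
    · exact Or.inl ⟨(hF t ht u hu).1 hlow, (hG t ht u hu).1 hlow⟩
    · have hhigh : 1 - ε ≤ u := not_lt.1 fun h => hout ⟨hlow, h⟩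
      exact Or.inr ⟨(hF t ht u hu).2 hhigh, (hG t ht u hu).2 hhigh⟩
  obtain ⟨hgap, hX, hY⟩ := hL _ _ hside
  exact ⟨sub_eq_zero.2 hgap, hX, hY⟩

omit hT in
theorem truncError_eq_zero {t u : ℝ} (h : truncGap F G T t u = 0)
    (hX : deriv T (F.quantile t u) = 0) (hY : deriv T (G.quantile t u) = 0) :
    truncError F G p T t u = 0 := by
  have h' : truncGap F G (deriv T) t u = 0 := by rw [truncGap, hX, hY, sub_self]
  simp only [truncError, h, h']
  ring

omit hT in
theorem truncDissipation_eq_zero {t u : ℝ} (hX : deriv T (F.quantile t u) = 0) :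
    truncDissipation F G p T t u = 0 := by
  simp only [truncDissipation, hX, zero_mul, mul_zero]

theorem integral_truncSource (hp : 2 ≤ p) (ha : DifferentiableOn ℝ a (Icc 0 1))
    (hb : ContinuousOn b (Icc 0 1)) {t₁ t₂ α β : ℝ} (h1 : 0 < t₁) (h12 : t₁ ≤ t₂) (hα : 0 < α)
    (hαβ : α ≤ β) (hβ : β < 1) (hgapα : ∀ t ∈ Icc t₁ t₂, truncGap F G T t α = 0)
    (hgapβ : ∀ t ∈ Icc t₁ t₂, truncGap F G T t β = 0) :
    ∫ u in α..β, (|truncGap F G T t₂ u| ^ p - |truncGap F G T t₁ u| ^ p) =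
      ∫ t in t₁..t₂, ∫ u in α..β, truncSource F G p T t u := by
  have hIcc : Icc α β ⊆ Ioo 0 1 := Icc_subset_Ioo hα hβ
  have hsub : Icc t₁ t₂ ×ˢ Icc α β ⊆ Ioi 0 ×ˢ Ioo 0 1 :=
    prod_mono (fun t ht => h1.trans_le ht.1) hIcc
  have hS : ContinuousOn (uncurry (truncSource F G p T)) (Ioi 0 ×ˢ Ioo 0 1) :=
    (continuousOn_truncError hT hp ha.continuousOn hb).sub
      (continuousOn_const.mul (continuousOn_truncDissipation hT hp ha.continuousOn))
  refine integral_sub_eq_integral_of_balance_law (w := fun t u => |truncGap F G T t u| ^ p)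
    (D := truncRate F G p T) (J := truncFlux F G p T) h12 hαβ
    (fun t ht u hu => hasDerivAt_abs_truncGap_rpow hT (one_lt_two.trans_le hp)
      (h1.trans_le ht.1) (hIcc hu))
    (fun t ht u hu => hasDerivAt_truncFlux hT hp ha (h1.trans_le ht.1) (hIcc hu))
    ((continuousOn_truncRate hT hp).mono hsub) (hS.mono hsub) fun t ht => ?_
  simp only [truncFlux, hgapα t ht, hgapβ t ht, mul_zero, zero_mul]

theorem integrableOn_truncError_and_truncDissipation (hp : 2 ≤ p) (ha : ContinuousOn a (Icc 0 1))
    (hb : ContinuousOn b (Icc 0 1)) {t₁ : ℝ} (h1 : 0 < t₁) (t₂ : ℝ) :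
    IntegrableOn (uncurry (truncError F G p T)) (Ioc t₁ t₂ ×ˢ Ioo 0 1) ∧
    IntegrableOn (uncurry (truncDissipation F G p T)) (Ioc t₁ t₂ ×ˢ Ioo 0 1) := by
  obtain ⟨α, β, hα, -, hβ, hzero⟩ := exists_truncGap_eq_zero (F := F) (G := G) hT h1 t₂
  have hsub : Icc t₁ t₂ ×ˢ Icc α β ⊆ Ioi 0 ×ˢ Ioo 0 1 :=
    prod_mono (fun t ht => h1.trans_le ht.1) (Icc_subset_Ioo hα hβ)
  refine ⟨integrableOn_slab ((continuousOn_truncError hT hp ha hb).mono hsub) ?_,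
    integrableOn_slab ((continuousOn_truncDissipation hT hp ha).mono hsub) ?_⟩
  all_goals
    intro t ht u hu hout
    obtain ⟨hgap, hX, hY⟩ := hzero t ht u hu hout
  · exact truncError_eq_zero hgap hX hY
  · exact truncDissipation_eq_zero hX

theorem truncEnergy_sub_truncEnergy_eq_integral_truncSource (hp : 2 ≤ p)
    (ha : DifferentiableOn ℝ a (Icc 0 1)) (hb : ContinuousOn b (Icc 0 1)) {t₁ t₂ : ℝ}
    (h1 : 0 < t₁) (h12 : t₁ ≤ t₂) : truncEnergy F G p T t₂ - truncEnergy F G p T t₁ =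
      ∫ q in Ioc t₁ t₂ ×ˢ Ioo 0 1, uncurry (truncSource F G p T) q := by
  obtain ⟨α, β, hα, hαβ, hβ, hzero⟩ := exists_truncGap_eq_zero (F := F) (G := G) hT h1 t₂
  obtain ⟨hiE, hiD⟩ := integrableOn_truncError_and_truncDissipation (F := F) (G := G) hT hp
    ha.continuousOn hb h1 t₂
  have hp0 : 0 < p := two_pos.trans_le hp
  have hIcc : Icc α β ⊆ Ioo 0 1 := Icc_subset_Ioo hα hβ
  have henergy : ∀ t ∈ Icc t₁ t₂, truncEnergy F G p T t = ∫ u in α..β, |truncGap F G T t u| ^ p :=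
    fun t ht => setIntegral_Ioo_eq_intervalIntegral hα hαβ hβ fun u hu hout => by
      rw [(hzero t ht u hu hout).1, abs_zero, Real.zero_rpow hp0.ne']
  have hInt : ∀ t ∈ Icc t₁ t₂,
      IntervalIntegrable (fun u => |truncGap F G T t u| ^ p) volume α β := fun t ht => by
    refine ContinuousOn.intervalIntegrable
      (ContinuousOn.mono ?_ ((uIcc_of_le hαβ).trans_subset hIcc))
    exact ((continuousOn_truncGap hT.contDiff.continuous).uncurry_left t
      (h1.trans_le ht.1)).abs.rpow_const fun _ _ => Or.inr hp0.le
  have hα' : α ∈ Ioo (0 : ℝ) 1 := hIcc ⟨le_rfl, hαβ⟩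
  have hβ' : β ∈ Ioo (0 : ℝ) 1 := hIcc ⟨hαβ, le_rfl⟩
  rw [henergy t₁ ⟨le_rfl, h12⟩, henergy t₂ ⟨h12, le_rfl⟩,
    ← intervalIntegral.integral_sub (hInt t₂ ⟨h12, le_rfl⟩) (hInt t₁ ⟨le_rfl, h12⟩),
    integral_truncSource hT hp ha hb h1 h12 hα hαβ hβ
      (fun t ht => (hzero t ht α hα' left_notMem_Ioo).1)
      (fun t ht => (hzero t ht β hβ' right_notMem_Ioo).1)]
  have hiS : IntegrableOn (uncurry (truncSource F G p T)) (Ioc t₁ t₂ ×ˢ Ioo 0 1) :=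
    hiE.sub (hiD.const_mul _)
  refine (setIntegral_slab_eq h12 hα hαβ hβ hiS fun t ht u hu hout => ?_).symm
  obtain ⟨hgap, hX, hY⟩ := hzero t ht u hu hout
  rw [truncSource, truncError_eq_zero hgap hX hY, truncDissipation_eq_zero hX, mul_zero, sub_zero]

theorem truncEnergy_sub_truncEnergy (hp : 2 ≤ p) (ha : DifferentiableOn ℝ a (Icc 0 1))
    (hb : ContinuousOn b (Icc 0 1)) {t₁ t₂ : ℝ} (h1 : 0 < t₁) (h12 : t₁ ≤ t₂) :
    truncEnergy F G p T t₂ - truncEnergy F G p T t₁ =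
      (∫ q in Ioc t₁ t₂ ×ˢ Ioo 0 1, uncurry (truncError F G p T) q)
        - p * (p - 1) / 2 * ∫ q in Ioc t₁ t₂ ×ˢ Ioo 0 1, uncurry (truncDissipation F G p T) q := by
  obtain ⟨hiE, hiD⟩ := integrableOn_truncError_and_truncDissipation (F := F) (G := G) hT hp
    ha.continuousOn hb h1 t₂
  rw [truncEnergy_sub_truncEnergy_eq_integral_truncSource hT hp ha hb h1 h12,
    ← integral_const_mul]
  exact integral_sub hiE (hiD.const_mul _)

end TruncatedQuantities

/-! ### Tails of weak solutions -/

open scoped NNReal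

section Bump

/-- The `L¹`-normalised dilation of `ψ` by the factor `ρ`. -/
def dilate (ρ : ℝ) (ψ : ℝ → ℝ) (x : ℝ) : ℝ := |ρ|⁻¹ * ψ (ρ⁻¹ * x)

variable {ρ : ℝ} {ψ : ℝ → ℝ}

theorem integral_dilate (hρ : ρ ≠ 0) (ψ : ℝ → ℝ) : ∫ x, dilate ρ ψ x = ∫ x, ψ x := by
  simp only [dilate]
  rw [integral_const_mul, Measure.integral_comp_mul_left, inv_inv, smul_eq_mul,
    inv_mul_cancel_left₀ (abs_ne_zero.2 hρ)]

theorem abs_dilate (ρ : ℝ) (ψ : ℝ → ℝ) (x : ℝ) :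
    |dilate ρ ψ x| = dilate ρ (fun y => |ψ y|) x := by
  simp only [dilate, abs_mul, abs_inv, abs_abs]

theorem deriv_dilate (ρ : ℝ) (ψ : ℝ → ℝ) : deriv (dilate ρ ψ) = ρ⁻¹ • dilate ρ (deriv ψ) := by
  ext x
  unfold dilate
  rw [deriv_const_mul_field, deriv_comp_mul_left]
  simp only [Pi.smul_apply, smul_eq_mul]
  ring

theorem integral_abs_deriv_dilate (hρ : ρ ≠ 0) (ψ : ℝ → ℝ) :
    ∫ x, |deriv (dilate ρ ψ) x| = |ρ|⁻¹ * ∫ x, |deriv ψ x| := by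
  simp only [deriv_dilate, Pi.smul_apply, smul_eq_mul, abs_mul, abs_dilate, abs_inv]
  rw [integral_const_mul, integral_dilate hρ]

theorem integral_abs_deriv_deriv_dilate (hρ : ρ ≠ 0) (ψ : ℝ → ℝ) :
    ∫ x, |deriv (deriv (dilate ρ ψ)) x| = |ρ|⁻¹ * (|ρ|⁻¹ * ∫ x, |deriv (deriv ψ) x|) := by
  have hscale : deriv (ρ⁻¹ • dilate ρ (deriv ψ)) = ρ⁻¹ • deriv (dilate ρ (deriv ψ)) :=
    funext fun x => deriv_const_smul_field ρ⁻¹ _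
  simp only [deriv_dilate ρ ψ, hscale, Pi.smul_apply, smul_eq_mul, abs_mul, abs_inv]
  rw [integral_const_mul, integral_abs_deriv_dilate hρ]

theorem tsupport_dilate_subset {l m : ℝ} (hρ : ρ ≠ 0) (hψ : tsupport ψ ⊆ uIcc l m) :
    tsupport (dilate ρ ψ) ⊆ uIcc (ρ * l) (ρ * m) := by
  rw [← image_const_mul_uIcc]
  refine closure_minimal (fun x hx => ⟨ρ⁻¹ * x, hψ (subset_tsupport _ ?_), ?_⟩) ?_
  · exact right_ne_zero_of_mul hx
  · exact mul_inv_cancel_left₀ hρ x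
  · rw [image_const_mul_uIcc]
    exact isClosed_Icc

/-- A smooth probability density with compact support. -/
structure IsBump (ψ : ℝ → ℝ) : Prop where
  contDiff : ContDiff ℝ (⊤ : ℕ∞) ψ
  hasCompactSupport : HasCompactSupport ψ
  nonneg (x) : 0 ≤ ψ x
  integral_eq_one : ∫ x, ψ x = 1

theorem exists_isBump_tsupport_subset : ∃ ψ, IsBump ψ ∧ tsupport ψ ⊆ uIcc 1 2 := by
  let φ : ContDiffBump (3 / 2 : ℝ) := ⟨1 / 4, 1 / 2, by norm_num, by norm_num⟩
  refine ⟨φ.normed volume, ⟨φ.contDiff_normed, φ.hasCompactSupport_normed, φ.nonneg_normed,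
    φ.integral_normed⟩, ?_⟩
  rw [φ.tsupport_normed_eq, Real.closedBall_eq_Icc, uIcc_of_le one_le_two]
  exact Icc_subset_Icc (by norm_num [φ]) (by norm_num [φ])

theorem IsBump.dilate (hψ : IsBump ψ) (hρ : ρ ≠ 0) : IsBump (dilate ρ ψ) where
  contDiff := contDiff_const.mul (hψ.contDiff.comp (contDiff_const.mul contDiff_id))
  hasCompactSupport := (hψ.hasCompactSupport.comp_homeomorph
    (Homeomorph.mulLeft₀ ρ⁻¹ (inv_ne_zero hρ))).mul_left
  nonneg x := mul_nonneg (by positivity) (hψ.nonneg _)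
  integral_eq_one := (integral_dilate hρ ψ).trans hψ.integral_eq_one

theorem IsBump.integral_mul_mem_Icc {f : ℝ → ℝ} {l m : ℝ} (hψ : IsBump ψ) (hf : Monotone f)
    (hs : tsupport ψ ⊆ Icc l m) : ∫ x, ψ x * f x ∈ Icc (f l) (f m) := by
  have hψi : Integrable ψ :=
    hψ.contDiff.continuous.integrable_of_hasCompactSupport hψ.hasCompactSupport
  have hψf : Integrable fun x => ψ x * f x :=
    hf.locallyIntegrable.integrable_smul_left_of_hasCompactSupport
      hψ.contDiff.continuous hψ.hasCompactSupport
  have hconst : ∀ y, ∫ x, ψ x * y = y := fun y => by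
    rw [integral_mul_const, hψ.integral_eq_one, one_mul]
  have hmem : ∀ x, ψ x ≠ 0 → x ∈ Icc l m := fun x hx => hs (subset_tsupport _ hx)
  rw [mem_Icc, ← hconst (f l), ← hconst (f m)]
  constructor
  · refine integral_mono (hψi.mul_const _) hψf fun x => ?_
    rcases eq_or_ne (ψ x) 0 with hx | hx
    · simp only [hx, zero_mul, le_refl]
    · exact mul_le_mul_of_nonneg_left (hf (hmem x hx).1) (hψ.nonneg x)
  · refine integral_mono hψf (hψi.mul_const _) fun x => ?_
    rcases eq_or_ne (ψ x) 0 with hx | hx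
    · simp only [hx, zero_mul, le_refl]
    · exact mul_le_mul_of_nonneg_left (hf (hmem x hx).2) (hψ.nonneg x)

theorem exists_isBump_integral_abs_deriv_le : ∃ K, ∀ ρ : ℝ, 1 ≤ |ρ| →
    ∃ ψ, IsBump ψ ∧ tsupport ψ ⊆ uIcc ρ (2 * ρ) ∧
      (∫ x, |deriv (deriv ψ) x|) + ∫ x, |deriv ψ x| ≤ K / |ρ| := by
  obtain ⟨ψ, hψ, hs⟩ := exists_isBump_tsupport_subset
  have hK₂ : 0 ≤ ∫ x, |deriv (deriv ψ) x| := integral_nonneg fun x => abs_nonneg _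
  refine ⟨(∫ x, |deriv (deriv ψ) x|) + ∫ x, |deriv ψ x|, fun ρ hρ => ?_⟩
  have hρ0 : ρ ≠ 0 := abs_pos.1 (one_pos.trans_le hρ)
  refine ⟨dilate ρ ψ, hψ.dilate hρ0, ?_, ?_⟩
  · simpa only [mul_one, mul_comm] using tsupport_dilate_subset hρ0 hs
  · rw [integral_abs_deriv_deriv_dilate hρ0, integral_abs_deriv_dilate hρ0, ← mul_add,
      div_eq_inv_mul]
    gcongr
    exact mul_le_of_le_one_left hK₂ (inv_le_one_of_one_le₀ hρ)

end Bump

theorem integrable_intervalIntegral_of_norm_le {k : ℝ → ℝ → ℝ} {g : ℝ → ℝ} {t : ℝ}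
    (hk : ContinuousOn (uncurry k) (Ioi 0 ×ˢ univ)) (ht : 0 ≤ t)
    (hkg : ∀ s ∈ Ioc 0 t, ∀ x, ‖k s x‖ ≤ g x) (hg : Integrable g) :
    (∀ x, IntervalIntegrable (fun s => k s x) volume 0 t) ∧
      Integrable fun x => ∫ s in (0 : ℝ)..t, k s x := by
  have hmeas : MeasurableSet (Ioc 0 t ×ˢ (univ : Set ℝ)) := measurableSet_Ioc.prod .univ
  have hprod : (volume : Measure (ℝ × ℝ)).restrict (Ioc 0 t ×ˢ univ) =
      (volume.restrict (Ioc 0 t)).prod volume := by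
    rw [Measure.volume_eq_prod, ← Measure.prod_restrict, Measure.restrict_univ]
  have hk' : ContinuousOn (uncurry k) (Ioc 0 t ×ˢ univ) :=
    hk.mono (prod_mono Ioc_subset_Ioi_self Subset.rfl)
  have hInt : Integrable (uncurry k) ((volume.restrict (Ioc 0 t)).prod volume) := by
    rw [← hprod]
    refine Integrable.mono' (g := fun q => g q.2) ?_ (hk'.aestronglyMeasurable hmeas) ?_
    · rw [hprod]
      exact hg.comp_snd _
    · filter_upwards [ae_restrict_mem hmeas] with q hq using hkg q.1 hq.1 q.2
  refine ⟨fun x => ?_, ?_⟩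
  · rw [intervalIntegrable_iff_integrableOn_Ioc_of_le ht]
    refine Integrable.of_bound (C := g x)
      ((hk'.uncurry_right x (mem_univ x)).aestronglyMeasurable measurableSet_Ioc) ?_
    filter_upwards [ae_restrict_mem measurableSet_Ioc] with s hs using hkg s hs x
  · simp_rw [intervalIntegral.integral_of_le ht]
    exact hInt.integral_prod_right

theorem norm_integral_intervalIntegral_add_le {k : ℝ → ℝ → ℝ} {g φ : ℝ → ℝ} {t : ℝ}
    (hk : ContinuousOn (uncurry k) (Ioi 0 ×ˢ univ)) (ht : 0 ≤ t)
    (hkg : ∀ s ∈ Ioc 0 t, ∀ x, ‖k s x‖ ≤ g x) (hg : Integrable g) (hφ : Integrable φ)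
    (hφ0 : ∫ x, φ x = 0) : ‖∫ x, ∫ s in (0 : ℝ)..t, (k s x + φ x)‖ ≤ t * ∫ x, g x := by
  obtain ⟨hks, hki⟩ := integrable_intervalIntegral_of_norm_le hk ht hkg hg
  have hsplit : ∀ x, ∫ s in (0 : ℝ)..t, (k s x + φ x) =
      (∫ s in (0 : ℝ)..t, k s x) + t * φ x := fun x => by
    rw [intervalIntegral.integral_add (hks x) (by simp), intervalIntegral.integral_const, sub_zero,
      smul_eq_mul]
  simp_rw [hsplit]
  rw [integral_add hki (hφ.const_mul t), integral_const_mul, hφ0, mul_zero, add_zero,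
    ← integral_const_mul]
  refine norm_integral_le_of_norm_le (hg.const_mul t) (Eventually.of_forall fun x => ?_)
  have hbound := intervalIntegral.norm_integral_le_of_norm_le_const (a := 0) (b := t)
    (f := fun s => k s x) (C := g x) fun s hs => hkg s (by rwa [uIoc_of_le ht] at hs) x
  rwa [sub_zero, abs_of_nonneg ht, mul_comm] at hbound

section Doubling

variable {ι : Type*} {S : Set ι} {M : ι → ℝ → ℝ}

theorem le_add_div_two_pow_of_contracting_doubling {R K η : ℝ} (hR : 0 ≤ R)
    (hK : ∀ s ∈ S, ∀ r ∈ Icc R (2 * R), M s r ≤ 2 * η + K)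
    (hstep : ∀ r, R ≤ r → ∀ κ, (∀ s ∈ S, M s r ≤ κ) → ∀ s ∈ S, M s (2 * r) ≤ η + κ / 2) (n : ℕ) :
    ∀ r ∈ Icc (2 ^ n * R) (2 ^ (n + 1) * R), ∀ s ∈ S, M s r ≤ 2 * η + K / 2 ^ n := by
  induction n with
  | zero =>
    intro r hr s hs
    rw [zero_add, pow_zero, one_mul, pow_one] at hr
    rw [pow_zero, div_one]
    exact hK s hs r hr
  | succ n ih =>
    intro r hr s hs
    have hr' : r / 2 ∈ Icc (2 ^ n * R) (2 ^ (n + 1) * R) := by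
      obtain ⟨hl, hu⟩ := hr
      rw [pow_succ _ n] at hl
      rw [pow_succ _ (n + 1)] at hu
      exact ⟨by linarith, by linarith⟩
    have hRr : R ≤ r / 2 := (le_mul_of_one_le_left hR (one_le_pow₀ one_le_two)).trans hr'.1
    calc M s r = M s (2 * (r / 2)) := by rw [mul_div_cancel₀ r two_ne_zero]
      _ ≤ η + (2 * η + K / 2 ^ n) / 2 := hstep _ hRr _ (ih _ hr') s hs
      _ = 2 * η + K / 2 ^ (n + 1) := by rw [pow_succ]; field_simp; ring

theorem eventually_le_of_contracting_doubling {δ : ℝ → ℝ}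
    (hbdd : ∀ R : ℝ, 0 < R → ∃ K, ∀ s ∈ S, ∀ r ∈ Icc R (2 * R), M s r ≤ K)
    (hδ : Tendsto δ atTop (𝓝 0))
    (hstep : ∀ᶠ r in atTop, ∀ κ, (∀ s ∈ S, M s r ≤ κ) → ∀ s ∈ S, M s (2 * r) ≤ δ r + κ / 2)
    {ε : ℝ} (hε : 0 < ε) : ∀ᶠ r in atTop, ∀ s ∈ S, M s r ≤ ε := by
  have hδε : ∀ᶠ r in atTop, δ r ≤ ε / 4 := hδ.eventually (ge_mem_nhds (by positivity))
  obtain ⟨R₀, hR₀⟩ := eventually_atTop.1 (hstep.and hδε)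
  set R := max R₀ 1
  have hR : 0 < R := one_pos.trans_le (le_max_right _ _)
  obtain ⟨K, hK⟩ := hbdd R hR
  have hdyadic := le_add_div_two_pow_of_contracting_doubling (K := |K|) (η := ε / 4) hR.le
    (fun s hs r hr => (hK s hs r hr).trans ((le_abs_self K).trans (by linarith)))
    fun r hr κ hκ s hs => by
      obtain ⟨hcontr, hδr⟩ := hR₀ r ((le_max_left _ _).trans hr)
      linarith [hcontr κ hκ s hs]
  have hlim : Tendsto (fun n : ℕ => 2 * (ε / 4) + |K| / 2 ^ n) atTop (𝓝 (2 * (ε / 4) + 0)) :=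
    (tendsto_const_nhds.div_atTop (tendsto_pow_atTop_atTop_of_one_lt one_lt_two)).const_add _
  obtain ⟨N, hN⟩ := eventually_atTop.1 (hlim.eventually_le_const (by linarith : _ < ε))
  filter_upwards [eventually_ge_atTop (2 ^ N * R)] with r hr s hs
  have hrR : (2 : ℝ) ^ N ≤ r / R := (le_div_iff₀ hR).2 hr
  obtain ⟨n, hn, hn'⟩ := exists_nat_pow_near ((one_le_pow₀ one_le_two).trans hrR)
    (one_lt_two (α := ℝ))
  have hNn : N ≤ n := Nat.lt_succ_iff.1 ((pow_lt_pow_iff_right₀ one_lt_two).1 (hrR.trans_lt hn'))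
  exact (hdyadic n r ⟨(le_div_iff₀ hR).1 hn, ((div_lt_iff₀ hR).1 hn').le⟩ s hs).trans (hN n hNn)

end Doubling

/-- The mass given to `(-∞, -r] ∪ (r, ∞)` by the probability measure with distribution function
`f`. -/
def tailMass (f : ℝ → ℝ) (r : ℝ) : ℝ := f (-r) + (1 - f r)

/-- The tail mass of `F s` at distance `r` is `o(r ^ (-q))` as `r → ∞`, uniformly for `s` in bounded
subsets of `(0, ∞)`. -/
def HasUniformTailDecay (q : ℝ) (F : ℝ → ℝ → ℝ) : Prop :=
  ∀ T ε, 0 < ε → ∀ᶠ r in atTop, ∀ s ∈ Ioc 0 T, r ^ q * tailMass (F s) r ≤ ε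

theorem tailMass_eq_tl_add_tl (f : ℝ → ℝ) {r : ℝ} (hr : 0 < r) :
    tailMass f r = tl f r + tl f (-r) := by
  simp [tailMass, tl, hr.le, hr.not_ge, add_comm]

theorem IsCDF.tailMass_mem_Icc {f : ℝ → ℝ} (hf : IsCDF f) (r : ℝ) :
    tailMass f r ∈ Icc (0 : ℝ) 2 := by
  have h₁ := hf.mem_Icc (-r)
  have h₂ := hf.mem_Icc r
  unfold tailMass
  constructor <;> linarith [h₁.1, h₁.2, h₂.1, h₂.2]

section WeakSolution

variable {A B F₀ ψ : ℝ → ℝ} {F : ℝ → ℝ → ℝ} {t : ℝ}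

/- The test function `ψ` is multiplied by a cutoff in time which equals one on `[0, t]`. -/
theorem IsWeakSolution.integral_mul_sub_integral_mul (hF : IsWeakSolution A B F₀ F)
    (hψ : ContDiff ℝ (⊤ : ℕ∞) ψ) (hψc : HasCompactSupport ψ) (ht : 0 ≤ t) :
    (∫ x, ψ x * F t x) - ∫ x, ψ x * F₀ x = ∫ x, ∫ s in (0 : ℝ)..t,
      (1 / 2 * A (F s x) * deriv (deriv ψ) x + B (F s x) * deriv ψ x) := by
  let θ : ContDiffBump (0 : ℝ) := ⟨t + 1, t + 2, by positivity, by linarith⟩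
  have hθ : ∀ s ∈ Icc 0 t, ∀ᶠ r in 𝓝 s, θ r = 1 := fun s hs => by
    refine θ.eventuallyEq_one_of_mem_ball (Metric.mem_ball.2 ?_)
    rw [Real.dist_0_eq_abs, abs_of_nonneg hs.1]
    exact hs.2.trans_lt (lt_add_one t)
  have hθψ : ∀ s ∈ Icc 0 t, (fun x => θ s * ψ x) = ψ := fun s hs => by
    simp only [(hθ s hs).self_of_nhds, one_mul]
  have hsmooth : ContDiff ℝ (⊤ : ℕ∞) (uncurry fun s x => θ s * ψ x) :=
    (θ.contDiff.comp contDiff_fst).mul (hψ.comp contDiff_snd)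
  have hcompact : HasCompactSupport (uncurry fun s x => θ s * ψ x) := by
    refine HasCompactSupport.intro (θ.hasCompactSupport.isCompact.prod hψc.isCompact) fun q hq => ?_
    rcases not_and_or.1 hq with h | h
    · exact mul_eq_zero_of_left (image_eq_zero_of_notMem_tsupport h) _
    · exact mul_eq_zero_of_right _ (image_eq_zero_of_notMem_tsupport h)
  have hweak := hF _ hsmooth hcompact t ht
  simp only [(hθ t ⟨ht, le_rfl⟩).self_of_nhds, (hθ 0 ⟨le_rfl, ht⟩).self_of_nhds, one_mul] at hweak
  rw [hweak]
  refine integral_congr_ae (Eventually.of_forall fun x => ?_)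
  refine intervalIntegral.integral_congr fun s hs => ?_
  rw [uIcc_of_le ht] at hs
  have htime : deriv (fun r => θ r * ψ x) s = 0 := by
    have hev : (fun r => θ r * ψ x) =ᶠ[𝓝 s] fun _ => ψ x := by
      filter_upwards [hθ s hs] with r hr using by rw [hr, one_mul]
    rw [hev.deriv_eq, deriv_const]
  simp only [hθψ s hs, htime, mul_zero, add_zero]

theorem integral_deriv_eq_zero_of_hasCompactSupport (hψ : ContDiff ℝ 1 ψ)
    (hψc : HasCompactSupport ψ) : ∫ x, deriv ψ x = 0 :=
  integral_eq_zero_of_hasDerivAt_of_integrable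
    (fun x => (hψ.differentiable one_ne_zero x).hasDerivAt)
    ((hψ.continuous_deriv le_rfl).integrable_of_hasCompactSupport hψc.deriv)
    (hψ.continuous.integrable_of_hasCompactSupport hψc)

theorem norm_flux_sub_le {C : ℝ≥0} {e v κ y z : ℝ} (hA : LipschitzOnWith C A (Icc 0 1))
    (hB : LipschitzOnWith C B (Icc 0 1)) (hv : v ∈ Icc (0 : ℝ) 1) (he : e ∈ Icc (0 : ℝ) 1)
    (hκ : |v - e| ≤ κ) :
    ‖1 / 2 * (A v - A e) * y + (B v - B e) * z‖ ≤ C * κ * (|y| + |z|) := by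
  have hlip : ∀ D, LipschitzOnWith C D (Icc 0 1) → |D v - D e| ≤ C * κ := fun D hD =>
    (hD.dist_le_mul v hv e he).trans (by gcongr; exact hκ)
  have : 0 ≤ C * κ := (abs_nonneg _).trans (hlip A hA)
  calc ‖1 / 2 * (A v - A e) * y + (B v - B e) * z‖
      ≤ 1 / 2 * |A v - A e| * |y| + |B v - B e| * |z| := by
        refine (norm_add_le _ _).trans_eq ?_
        simp only [Real.norm_eq_abs, abs_mul, abs_of_pos (one_half_pos (α := ℝ))]
    _ ≤ 1 * (C * κ) * |y| + C * κ * |z| := by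
        gcongr
        · exact one_half_lt_one.le
        · exact hlip A hA
        · exact hlip B hB
    _ = C * κ * (|y| + |z|) := by ring

/- Since `∫ ψ' = ∫ ψ'' = 0`, the fluxes `A`, `B` may be replaced by `A - A e`, `B - B e`. -/
theorem IsWeakSolution.abs_integral_mul_sub_integral_mul_le {C : ℝ≥0} {e κ : ℝ}
    (hF : IsWeakSolution A B F₀ F) (hA : LipschitzOnWith C A (Icc 0 1))
    (hB : LipschitzOnWith C B (Icc 0 1)) (hcont : ContinuousOn (uncurry F) (Ioi 0 ×ˢ univ))
    (hmem : ∀ s, 0 < s → ∀ x, F s x ∈ Icc (0 : ℝ) 1) (hψ : ContDiff ℝ (⊤ : ℕ∞) ψ)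
    (hψc : HasCompactSupport ψ) (he : e ∈ Icc (0 : ℝ) 1) (ht : 0 ≤ t)
    (hκ : ∀ s ∈ Ioc 0 t, ∀ x ∈ tsupport ψ, |F s x - e| ≤ κ) :
    |(∫ x, ψ x * F t x) - ∫ x, ψ x * F₀ x| ≤
      t * (C * κ) * ((∫ x, |deriv (deriv ψ) x|) + ∫ x, |deriv ψ x|) := by
  have hψ' : ContDiff ℝ (⊤ : ℕ∞) (deriv ψ) := (contDiff_infty_iff_deriv.1 hψ).2
  have hψ'' : Continuous (deriv (deriv ψ)) := hψ'.continuous_deriv (by simp)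
  have i₁ : Integrable (deriv ψ) := hψ'.continuous.integrable_of_hasCompactSupport hψc.deriv
  have i₂ : Integrable (deriv (deriv ψ)) :=
    hψ''.integrable_of_hasCompactSupport hψc.deriv.deriv
  set k : ℝ → ℝ → ℝ := fun s x =>
    1 / 2 * (A (F s x) - A e) * deriv (deriv ψ) x + (B (F s x) - B e) * deriv ψ x
  have hcomp : ∀ D : ℝ → ℝ, LipschitzOnWith C D (Icc 0 1) →
      ContinuousOn (fun q : ℝ × ℝ => D (F q.1 q.2)) (Ioi 0 ×ˢ univ) := fun D hD =>
    hD.continuousOn.comp hcont fun q hq => hmem q.1 hq.1 q.2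
  have hkcont : ContinuousOn (uncurry k) (Ioi 0 ×ˢ univ) :=
    ((continuousOn_const.mul ((hcomp A hA).sub continuousOn_const)).mul
      (hψ''.comp continuous_snd).continuousOn).add
        (((hcomp B hB).sub continuousOn_const).mul
          (hψ'.continuous.comp continuous_snd).continuousOn)
  have hkb : ∀ s ∈ Ioc 0 t, ∀ x, ‖k s x‖ ≤ C * κ * (|deriv (deriv ψ) x| + |deriv ψ x|) := by
    intro s hs x
    by_cases hx : x ∈ tsupport ψ
    · exact norm_flux_sub_le hA hB (hmem s hs.1 x) he (hκ s hs x hx)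
    · have h₁ : x ∉ tsupport (deriv ψ) := fun h => hx (tsupport_deriv_subset h)
      have h₂ : x ∉ tsupport (deriv (deriv ψ)) := fun h => h₁ (tsupport_deriv_subset h)
      simp [k, image_eq_zero_of_notMem_tsupport h₁, image_eq_zero_of_notMem_tsupport h₂]
  have hk : ∀ s x, 1 / 2 * A (F s x) * deriv (deriv ψ) x + B (F s x) * deriv ψ x =
      k s x + (1 / 2 * A e * deriv (deriv ψ) x + B e * deriv ψ x) := fun s x => by ring
  have hzero : ∫ x, (1 / 2 * A e * deriv (deriv ψ) x + B e * deriv ψ x) = 0 := by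
    rw [integral_add (i₂.const_mul _) (i₁.const_mul _), integral_const_mul, integral_const_mul,
      integral_deriv_eq_zero_of_hasCompactSupport (hψ'.of_le (by simp)) hψc.deriv,
      integral_deriv_eq_zero_of_hasCompactSupport (hψ.of_le (by simp)) hψc, mul_zero, mul_zero,
      add_zero]
  rw [hF.integral_mul_sub_integral_mul hψ hψc ht, ← integral_add i₂.abs i₁.abs, mul_assoc,
    ← integral_const_mul]
  simp_rw [hk]
  exact norm_integral_intervalIntegral_add_le hkcont ht hkb ((i₂.abs.add i₁.abs).const_mul _)
    ((i₂.const_mul _).add (i₁.const_mul _)) hzero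

theorem IsWeakSolution.abs_integral_bump_sub_le {C : ℝ≥0} {T K e κ r : ℝ}
    (hF : IsWeakSolution A B F₀ F) (hA : LipschitzOnWith C A (Icc 0 1))
    (hB : LipschitzOnWith C B (Icc 0 1)) (hcont : ContinuousOn (uncurry F) (Ioi 0 ×ˢ univ))
    (hcdf : ∀ s, 0 < s → IsCDF (F s)) (hψ : IsBump ψ)
    (hK : (∫ x, |deriv (deriv ψ) x|) + ∫ x, |deriv ψ x| ≤ K / r) (hκ0 : 0 ≤ κ)
    (he : e ∈ Icc (0 : ℝ) 1) (ht : t ∈ Ioc 0 T)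
    (hκ : ∀ s ∈ Ioc 0 T, ∀ x ∈ tsupport ψ, |F s x - e| ≤ κ) :
    |(∫ x, ψ x * F t x) - ∫ x, ψ x * F₀ x| ≤ T * C * K * κ / r := by
  refine (hF.abs_integral_mul_sub_integral_mul_le hA hB hcont (fun s hs => (hcdf s hs).mem_Icc)
    hψ.contDiff hψ.hasCompactSupport he ht.1.le
    fun s hs => hκ s ⟨hs.1, hs.2.trans ht.2⟩).trans ?_
  have ht0 : 0 ≤ t := ht.1.le
  have hT : t ≤ T := ht.2
  calc t * (C * κ) * ((∫ x, |deriv (deriv ψ) x|) + ∫ x, |deriv ψ x|)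
      ≤ T * (C * κ) * (K / r) := by
        gcongr
        exact mul_nonneg (ht0.trans hT) (by positivity)
    _ = T * C * K * κ / r := by ring

/- The weak formulation is tested with bumps carried by `[r, 2 r]` and `[-2 r, -r]`. -/
theorem IsWeakSolution.exists_tailMass_two_mul_le {C : ℝ≥0} (hF : IsWeakSolution A B F₀ F)
    (hA : LipschitzOnWith C A (Icc 0 1)) (hB : LipschitzOnWith C B (Icc 0 1))
    (hcont : ContinuousOn (uncurry F) (Ioi 0 ×ˢ univ)) (hcdf : ∀ s, 0 < s → IsCDF (F s))
    (hF₀ : Monotone F₀) (T : ℝ) : ∃ K, ∀ r, 1 ≤ r → ∀ κ,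
      (∀ s ∈ Ioc 0 T, tailMass (F s) r ≤ κ) →
        ∀ s ∈ Ioc 0 T, tailMass (F s) (2 * r) ≤ tailMass F₀ r + K * κ / r := by
  obtain ⟨K, hbump⟩ := exists_isBump_integral_abs_deriv_le
  refine ⟨2 * (T * C * K), fun r hr κ hκ t ht => ?_⟩
  have hr0 : 0 < r := one_pos.trans_le hr
  have hκ0 : 0 ≤ κ := ((hcdf t ht.1).tailMass_mem_Icc r).1.trans (hκ t ht)
  obtain ⟨ψ, hψ, hψs, hψK⟩ := hbump r (hr.trans (le_abs_self r))
  obtain ⟨χ, hχ, hχs, hχK⟩ := hbump (-r) (by rwa [abs_neg, abs_of_pos hr0])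
  rw [abs_of_pos hr0] at hψK
  rw [abs_neg, abs_of_pos hr0] at hχK
  rw [uIcc_of_le (by linarith)] at hψs
  rw [uIcc_of_ge (by linarith), mul_neg] at hχs
  have htop : ∀ s ∈ Ioc 0 T, ∀ x ∈ tsupport ψ, |F s x - 1| ≤ κ := fun s hs x hx => by
    have hmono := (hcdf s hs.1).monotone (hψs hx).1
    have htail : F s (-r) + (1 - F s r) ≤ κ := hκ s hs
    rw [abs_sub_comm, abs_of_nonneg (sub_nonneg.2 ((hcdf s hs.1).mem_Icc x).2)]
    linarith [((hcdf s hs.1).mem_Icc (-r)).1]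
  have hbot : ∀ s ∈ Ioc 0 T, ∀ x ∈ tsupport χ, |F s x - 0| ≤ κ := fun s hs x hx => by
    have hmono := (hcdf s hs.1).monotone (hχs hx).2
    have htail : F s (-r) + (1 - F s r) ≤ κ := hκ s hs
    rw [sub_zero, abs_of_nonneg ((hcdf s hs.1).mem_Icc x).1]
    linarith [((hcdf s hs.1).mem_Icc r).2]
  have hψF := abs_le.1 (hF.abs_integral_bump_sub_le hA hB hcont hcdf hψ hψK hκ0
    (right_mem_Icc.2 zero_le_one) ht htop)
  have hχF := abs_le.1 (hF.abs_integral_bump_sub_le hA hB hcont hcdf hχ hχK hκ0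
    (left_mem_Icc.2 zero_le_one) ht hbot)
  have hψt := (hψ.integral_mul_mem_Icc (hcdf t ht.1).monotone hψs).2
  have hψ₀ := (hψ.integral_mul_mem_Icc hF₀ hψs).1
  have hχt := (hχ.integral_mul_mem_Icc (hcdf t ht.1).monotone hχs).1
  have hχ₀ := (hχ.integral_mul_mem_Icc hF₀ hχs).2
  rw [mul_assoc 2, mul_div_assoc]
  unfold tailMass
  linarith [hψF.1, hχF.2]

theorem IsWeakSolution.hasUniformTailDecay {C D : ℝ≥0} {q : ℝ}
    (hF : IsWeakSolution A B F₀ F)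
    (hA : LipschitzOnWith C A (Icc 0 1)) (hB : LipschitzOnWith D B (Icc 0 1))
    (hcont : ContinuousOn (uncurry F) (Ioi 0 ×ˢ univ)) (hcdf : ∀ s, 0 < s → IsCDF (F s))
    (hF₀ : Monotone F₀) (hq : 0 ≤ q)
    (htail : Tendsto (fun r => r ^ q * tailMass F₀ r) atTop (𝓝 0)) :
    HasUniformTailDecay q F := by
  intro T ε hε
  obtain ⟨K, hK⟩ := hF.exists_tailMass_two_mul_le (hA.weaken (le_max_left C D))
    (hB.weaken (le_max_right C D)) hcont hcdf hF₀ T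
  have hδ : Tendsto (fun r => 2 ^ q * (r ^ q * tailMass F₀ r)) atTop (𝓝 0) := by
    simpa only [mul_zero] using htail.const_mul (2 ^ q)
  refine eventually_le_of_contracting_doubling (fun R hR => ⟨(2 * R) ^ q * 2, ?_⟩) hδ ?_ hε
  · intro s hs r hr
    have hr0 : 0 < r := hR.trans_le hr.1
    have := (hcdf s hs.1).tailMass_mem_Icc r
    gcongr
    exacts [this.1, hr.2, this.2]
  · filter_upwards [eventually_ge_atTop 1, eventually_ge_atTop (2 * (2 ^ q * K))]
      with r hr hKr κ hκ s hs
    have hr0 : 0 < r := one_pos.trans_le hr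
    have hrq : 0 < r ^ q := Real.rpow_pos_of_pos hr0 q
    have hκ0 : 0 ≤ κ :=
      (mul_nonneg hrq.le ((hcdf s hs.1).tailMass_mem_Icc r).1).trans (hκ s hs)
    have hsmall : 2 ^ q * K / r ≤ 1 / 2 := by
      rw [div_le_div_iff₀ hr0 two_pos]
      linarith
    calc (2 * r) ^ q * tailMass (F s) (2 * r)
        ≤ (2 * r) ^ q * (tailMass F₀ r + K * (κ / r ^ q) / r) := by
          gcongr
          exact hK r hr _ (fun s hs => (le_div_iff₀' hrq).2 (hκ s hs)) s hs
      _ = 2 ^ q * (r ^ q * tailMass F₀ r) + 2 ^ q * K / r * κ := by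
          rw [Real.mul_rpow two_pos.le hr0.le]
          field_simp
      _ ≤ 2 ^ q * (r ^ q * tailMass F₀ r) + 1 / 2 * κ := by gcongr
      _ = 2 ^ q * (r ^ q * tailMass F₀ r) + κ / 2 := by ring

end WeakSolution

/-! ### Behaviour at the initial time -/

theorem eq_of_ae_eq_of_continuousWithinAt_Ici {E : Type*} [TopologicalSpace E] [T2Space E]
    {f g : ℝ → E} (hf : ∀ x, ContinuousWithinAt f (Ici x) x)
    (hg : ∀ x, ContinuousWithinAt g (Ici x) x) (h : f =ᵐ[volume] g) : f = g := by
  funext x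
  have hfreq : ∃ᶠ y in 𝓝[>] x, f y = g y := by
    refine (nhdsGT_basis x).frequently_iff.2 fun y hy => ?_
    obtain ⟨z, hz, hfg⟩ := (Measure.dense_of_ae h).exists_mem_open isOpen_Ioo (nonempty_Ioo.2 hy)
    exact ⟨z, hfg, hz⟩
  exact tendsto_nhds_unique_of_frequently_eq ((hf x).mono Ioi_subset_Ici_self)
    ((hg x).mono Ioi_subset_Ici_self) hfreq

theorem IsWeakSolution.apply_zero {A B F₀ : ℝ → ℝ} {F : ℝ → ℝ → ℝ} (hF : IsWeakSolution A B F₀ F)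
    (h0 : IsCDF (F 0)) (hF₀ : IsCDF F₀) : F 0 = F₀ := by
  refine eq_of_ae_eq_of_continuousWithinAt_Ici h0.continuousWithinAt_Ici
    hF₀.continuousWithinAt_Ici (ae_eq_of_integral_contDiff_smul_eq
      h0.monotone.locallyIntegrable hF₀.monotone.locallyIntegrable fun ψ hψ hψc => ?_)
  have := hF.integral_mul_sub_integral_mul (hψ.of_le le_rfl) hψc le_rfl
  simpa only [intervalIntegral.integral_same, integral_zero, sub_eq_zero, smul_eq_mul] using this

section PseudoInverse

variable {f : ℝ → ℝ} {x u : ℝ}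

theorem IsCDF.pinv_le (hf : IsCDF f) (hu : 0 < u) (h : u < f x) : pinv f u ≤ x := by
  obtain ⟨y, hy⟩ := (hf.tendsto_atBot.eventually (gt_mem_nhds hu)).exists
  exact csInf_le ⟨y, fun z hz => (hf.monotone.reflect_lt (hy.trans hz)).le⟩ h

theorem IsCDF.le_pinv (hf : IsCDF f) (hu : u < 1) (h : f x ≤ u) : x ≤ pinv f u := by
  obtain ⟨y, hy⟩ := (hf.tendsto_atTop.eventually (lt_mem_nhds hu)).exists
  exact le_csInf ⟨y, hy⟩ fun z hz => (hf.monotone.reflect_lt (h.trans_lt hz)).le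

/- Such a `u` is a continuity point of `pinv g`: the set `{g = u}` contains no two rationals, hence
no interval. -/
theorem IsCDF.tendsto_pinv {ι : Type*} {l : Filter ι} {f : ι → ℝ → ℝ} {g : ℝ → ℝ} {D : Set ℝ}
    (hf : ∀ᶠ i in l, IsCDF (f i)) (hg : IsCDF g) (hD : Dense D)
    (hlim : ∀ x ∈ D, Tendsto (fun i => f i x) l (𝓝 (g x))) (hu : u ∈ Ioo (0 : ℝ) 1)
    (hrange : u ∉ range fun r : ℚ => g r) :
    Tendsto (fun i => pinv (f i) u) l (𝓝 (pinv g u)) := by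
  refine tendsto_order.2 ⟨fun x hx => ?_, fun x hx => ?_⟩
  · obtain ⟨r, hxr, hr⟩ := exists_rat_btwn hx
    have hgr : g r < u :=
      (not_lt.1 fun h => (hg.pinv_le hu.1 h).not_gt hr).lt_of_ne fun h => hrange ⟨r, h⟩
    obtain ⟨y, hyD, hy⟩ := hD.exists_between hxr
    filter_upwards [hf, (hlim y hyD).eventually (gt_mem_nhds ((hg.monotone hy.2.le).trans_lt hgr))]
      with i hi hiy
    exact hy.1.trans_le (hi.le_pinv hu.2 hiy.le)
  · obtain ⟨y, hpy, hyx⟩ := exists_between hx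
    have hgy : u < g y := not_le.1 fun h => (hg.le_pinv hu.2 h).not_gt hpy
    obtain ⟨z, hzD, hz⟩ := hD.exists_between hyx
    filter_upwards [hf, (hlim z hzD).eventually (lt_mem_nhds (hgy.trans_le (hg.monotone hz.1.le)))]
      with i hi hiz
    exact (hi.pinv_le hu.1 hiz).trans_lt hz.2

end PseudoInverse

theorem tendsto_cdfOf {ι : Type*} {l : Filter ι} {P : ι → ProbabilityMeasure ℝ}
    {Q : ProbabilityMeasure ℝ} (h : Tendsto P l (𝓝 Q)) {x : ℝ} (hx : (Q : Measure ℝ) {x} = 0) :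
    Tendsto (fun i => cdfOf (P i) x) l (𝓝 (cdfOf Q x)) := by
  refine (ENNReal.tendsto_toReal (measure_ne_top _ _)).comp
    (ProbabilityMeasure.tendsto_measure_of_null_frontier_of_tendsto' h ?_)
  rwa [frontier_Iic]

theorem IsCDFFlow.ae_tendsto_pinv {F : ℝ → ℝ → ℝ} (hF : IsCDFFlow F) :
    ∀ᵐ u ∂volume.restrict (Ioo (0 : ℝ) 1),
      Tendsto (fun t => pinv (F t) u) (𝓝[>] 0) (𝓝 (pinv (F 0) u)) := by
  obtain ⟨P, hP, hPF⟩ := id hF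
  have hP0 : Tendsto P (𝓝[>] 0) (𝓝 (P 0)) := (hP 0 self_mem_Ici).mono Ioi_subset_Ici_self
  have hatoms : Dense {x : ℝ | 0 < (P 0 : Measure ℝ) {x}}ᶜ :=
    (Measure.countable_meas_level_set_pos measurable_id).dense_compl ℝ
  have hlim : ∀ x ∈ {x : ℝ | 0 < (P 0 : Measure ℝ) {x}}ᶜ,
      Tendsto (fun t => F t x) (𝓝[>] 0) (𝓝 (F 0 x)) := fun x hx => by
    rw [hPF 0 le_rfl]
    refine (tendsto_cdfOf hP0 (nonpos_iff_eq_zero.1 (not_lt.1 hx))).congr' ?_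
    filter_upwards [self_mem_nhdsWithin] with t ht
    rw [hPF t (le_of_lt ht)]
  have hcdf : ∀ᶠ t in 𝓝[>] (0 : ℝ), IsCDF (F t) := by
    filter_upwards [self_mem_nhdsWithin] with t ht using hF.isCDF (le_of_lt ht)
  filter_upwards [ae_restrict_mem measurableSet_Ioo,
    ae_restrict_of_ae ((countable_range fun r : ℚ => F 0 r).ae_notMem volume)] with u hu hur
  exact IsCDF.tendsto_pinv hcdf (hF.isCDF le_rfl) hatoms hlim hu hur

section InitialEnergy

variable {a b : ℝ → ℝ} {F G : PositiveFlow a b} {p : ℝ} {T : ℝ → ℝ}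

theorem tendsto_truncEnergy_zero (hF : IsCDFFlow F.cdf) (hG : IsCDFFlow G.cdf) (hp : 0 ≤ p)
    (hT : Continuous T) {C : ℝ} (hC : ∀ x, |T x| ≤ C) :
    Tendsto (truncEnergy F G p T) (𝓝[>] 0) (𝓝 (truncEnergy F G p T 0)) := by
  refine tendsto_integral_filter_of_dominated_convergence (fun _ => (C + C) ^ p) ?_ ?_
    (integrable_const _) ?_
  · filter_upwards [self_mem_nhdsWithin] with t ht
    exact ((continuousOn_abs_truncGap_rpow hT hp).comp (f := fun u : ℝ => (t, u)) (by fun_prop)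
      fun u hu => ⟨ht, hu⟩).aestronglyMeasurable measurableSet_Ioo
  · refine Eventually.of_forall fun t => Eventually.of_forall fun u => ?_
    rw [Real.norm_of_nonneg (by positivity)]
    gcongr
    exact (abs_sub _ _).trans (add_le_add (hC _) (hC _))
  · filter_upwards [hF.ae_tendsto_pinv, hG.ae_tendsto_pinv] with u hFu hGu
    exact (((hT.tendsto _).comp hFu).sub ((hT.tendsto _).comp hGu)).abs.rpow_const (Or.inr hp)

theorem lintegral_lt_top_of_wdist_lt_top {f g : ℝ → ℝ} (hp : 0 < p) (h : Wdist p f g < ⊤) :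
    ∫⁻ u in Ioo (0 : ℝ) 1, ENNReal.ofReal (|pinv f u - pinv g u| ^ p) < ⊤ :=
  (ENNReal.rpow_lt_top_iff_of_pos (one_div_pos.2 hp)).1 h

theorem truncEnergy_le_toReal_lintegral {t : ℝ} (hp : 0 ≤ p) (hT : LipschitzWith 1 T)
    (hfin : ∫⁻ u in Ioo (0 : ℝ) 1, ENNReal.ofReal (|F.quantile t u - G.quantile t u| ^ p) < ⊤) :
    truncEnergy F G p T t ≤
      (∫⁻ u in Ioo (0 : ℝ) 1, ENNReal.ofReal (|F.quantile t u - G.quantile t u| ^ p)).toReal := by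
  by_cases hInt : IntegrableOn (fun u => |truncGap F G T t u| ^ p) (Ioo 0 1)
  · rw [← ENNReal.ofReal_le_iff_le_toReal hfin.ne, truncEnergy,
      ofReal_integral_eq_lintegral_ofReal hInt (Eventually.of_forall fun u => by positivity)]
    refine lintegral_mono fun u => ENNReal.ofReal_le_ofReal ?_
    refine Real.rpow_le_rpow (abs_nonneg _) ?_ hp
    simpa [truncGap, Real.dist_eq] using hT.dist_le_mul (F.quantile t u) (G.quantile t u)
  · rw [truncEnergy, integral_undef hInt]
    exact ENNReal.toReal_nonneg

end InitialEnergy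

/-! ### A family of truncations -/

/-- A smooth cutoff, nonincreasing in `|x|`, equal to one on `[-1, 1]` and to zero off `[-2, 2]`. -/
def cutoff (x : ℝ) : ℝ := Real.smoothTransition (2 - x ^ 2)

/-- The truncation at scale `R`, which coincides with the identity on `[-R, R]` and is constant on
either side of `[-2 * R, 2 * R]`. -/
def trunc (R x : ℝ) : ℝ := ∫ y in (0 : ℝ)..x, cutoff (y / R)

theorem contDiff_cutoff : ContDiff ℝ (⊤ : ℕ∞) cutoff :=
  Real.smoothTransition.contDiff.comp (contDiff_const.sub (contDiff_id.pow 2))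

theorem cutoff_mem_Icc (x : ℝ) : cutoff x ∈ Icc (0 : ℝ) 1 :=
  ⟨Real.smoothTransition.nonneg _, Real.smoothTransition.le_one _⟩

theorem cutoff_le_cutoff {x y : ℝ} (h : |x| ≤ |y|) : cutoff y ≤ cutoff x :=
  Real.smoothTransition.monotone (sub_le_sub_left (sq_le_sq.2 h) 2)

theorem cutoff_eq_one {x : ℝ} (hx : |x| ≤ 1) : cutoff x = 1 :=
  Real.smoothTransition.one_of_one_le (by linarith [(sq_le_one_iff_abs_le_one x).2 hx])

theorem hasCompactSupport_cutoff : HasCompactSupport cutoff := by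
  refine HasCompactSupport.intro (isCompact_Icc (a := -2) (b := 2)) fun x hx => ?_
  refine Real.smoothTransition.zero_of_nonpos ?_
  rw [mem_Icc, ← abs_le, not_le] at hx
  nlinarith [sq_abs x]

theorem continuous_cutoff_div (R : ℝ) : Continuous fun x => cutoff (x / R) :=
  contDiff_cutoff.continuous.comp (continuous_id.div_const R)

theorem cutoff_div_le_cutoff_div {R R' : ℝ} (hR : 0 < R) (hRR' : R ≤ R') (x : ℝ) :
    cutoff (x / R) ≤ cutoff (x / R') := by
  refine cutoff_le_cutoff ?_
  rw [abs_div, abs_div, abs_of_pos hR, abs_of_pos (hR.trans_le hRR')]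
  gcongr

theorem cutoff_div_eq_one {R x : ℝ} (hx : |x| ≤ R) : cutoff (x / R) = 1 := by
  refine cutoff_eq_one ?_
  rw [abs_div]
  exact div_le_one_of_le₀ (hx.trans (le_abs_self R)) (abs_nonneg R)

theorem deriv_trunc (R : ℝ) : deriv (trunc R) = fun x => cutoff (x / R) :=
  funext fun _ => (continuous_cutoff_div R).deriv_integral _ _ _

theorem deriv_deriv_trunc (R x : ℝ) : deriv (deriv (trunc R)) x = deriv cutoff (x / R) / R := by
  have h := (contDiff_cutoff.differentiable (by simp) (x / R)).hasDerivAt.comp x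
    ((hasDerivAt_id x).div_const R)
  rw [deriv_trunc, ← mul_one_div]
  exact h.deriv

theorem isTruncation_trunc {R : ℝ} (hR : R ≠ 0) : IsTruncation (trunc R) where
  contDiff := by
    have hdiff : Differentiable ℝ (trunc R) := fun x =>
      ((continuous_cutoff_div R).integral_hasStrictDerivAt 0 x).hasDerivAt.differentiableAt
    refine (contDiff_succ_iff_deriv (n := 1)).2 ⟨hdiff, by simp, ?_⟩
    rw [deriv_trunc]
    exact (contDiff_cutoff.of_le (by simp)).comp (contDiff_id.div_const R)
  hasCompactSupport_deriv := by
    rw [deriv_trunc]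
    simp only [div_eq_inv_mul]
    exact hasCompactSupport_cutoff.comp_homeomorph (Homeomorph.mulLeft₀ R⁻¹ (inv_ne_zero hR))

theorem trunc_sub_trunc (R x y : ℝ) : trunc R x - trunc R y = ∫ z in y..x, cutoff (z / R) :=
  intervalIntegral.integral_interval_sub_left
    ((continuous_cutoff_div R).intervalIntegrable _ _)
    ((continuous_cutoff_div R).intervalIntegrable _ _)

theorem abs_trunc_sub_trunc_le {R R' : ℝ} (hR : 0 < R) (hRR' : R ≤ R') (x y : ℝ) :
    |trunc R x - trunc R y| ≤ |trunc R' x - trunc R' y| := by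
  rw [trunc_sub_trunc, trunc_sub_trunc, ← Real.norm_eq_abs]
  refine intervalIntegral.norm_integral_le_abs_of_norm_le (Eventually.of_forall fun z => ?_)
    ((continuous_cutoff_div R').intervalIntegrable _ _)
  rw [Real.norm_of_nonneg (cutoff_mem_Icc _).1]
  exact cutoff_div_le_cutoff_div hR hRR' z

theorem lipschitzWith_trunc (R : ℝ) : LipschitzWith 1 (trunc R) := by
  refine LipschitzWith.of_dist_le_mul fun x y => ?_
  rw [Real.dist_eq, trunc_sub_trunc, Real.dist_eq, ← Real.norm_eq_abs]
  refine intervalIntegral.norm_integral_le_of_norm_le_const fun z _ => ?_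
  rw [Real.norm_of_nonneg (cutoff_mem_Icc _).1]
  exact (cutoff_mem_Icc _).2

theorem abs_trunc_le {R : ℝ} (hR : 0 < R) (x : ℝ) : |trunc R x| ≤ R * ∫ y, cutoff y := by
  have hInt : Integrable fun y => cutoff (y / R) :=
    (contDiff_cutoff.continuous.integrable_of_hasCompactSupport hasCompactSupport_cutoff).comp_div
      hR.ne'
  have hnonneg : ∀ y, 0 ≤ cutoff (y / R) := fun y => (cutoff_mem_Icc _).1
  calc ‖trunc R x‖ ≤ ∫ y in uIoc 0 x, ‖cutoff (y / R)‖ :=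
        intervalIntegral.norm_integral_le_integral_norm_uIoc
    _ ≤ ∫ y, ‖cutoff (y / R)‖ :=
        setIntegral_le_integral hInt.norm (Eventually.of_forall fun y => norm_nonneg _)
    _ = R * ∫ y, cutoff y := by
        simp only [Real.norm_of_nonneg (hnonneg _), Measure.integral_comp_div, abs_of_pos hR,
          smul_eq_mul]

theorem trunc_eq_self {R x : ℝ} (hx : |x| ≤ R) : trunc R x = x := by
  have hone : EqOn (fun y => cutoff (y / R)) (fun _ => 1) (uIcc 0 x) := fun y hy => by
    refine cutoff_div_eq_one (le_trans ?_ hx)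
    simpa using abs_sub_left_of_mem_uIcc hy
  rw [trunc, intervalIntegral.integral_congr hone]
  simp

theorem deriv_trunc_eq_one {R x : ℝ} (hx : |x| ≤ R) : deriv (trunc R) x = 1 := by
  rw [deriv_trunc]
  exact cutoff_div_eq_one hx

theorem deriv_deriv_trunc_eq_zero {R x : ℝ} (hx : |x| < R) : deriv (deriv (trunc R)) x = 0 := by
  have h : deriv (trunc R) =ᶠ[𝓝 x] fun _ => 1 :=
    (continuous_abs.continuousAt.eventually (gt_mem_nhds hx)).mono fun y hy =>
      deriv_trunc_eq_one (le_of_lt hy)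
  rw [h.deriv_eq, deriv_const]

/-! ### The error of truncation -/

section TruncationError

variable {a b : ℝ → ℝ}

theorem PositiveFlow.volume_real_le_abs_quantile_le (S : PositiveFlow a b) {t : ℝ} (ht : 0 < t)
    (R : ℝ) : volume.real {u ∈ Ioo (0 : ℝ) 1 | R ≤ |S.quantile t u|} ≤ tailMass (S.cdf t) R := by
  have hsub : {u ∈ Ioo (0 : ℝ) 1 | R ≤ |S.quantile t u|} ⊆
      Ioc 0 (S.cdf t (-R)) ∪ Ico (S.cdf t R) 1 := by
    rintro u ⟨hu, hR⟩
    rcases le_abs'.1 hR with h | h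
    · exact Or.inl ⟨hu.1, not_lt.1 fun hlt => h.not_gt ((S.lt_quantile_iff ht hu).2 hlt)⟩
    · exact Or.inr ⟨not_lt.1 fun hlt => h.not_gt ((S.quantile_lt_iff ht hu).2 hlt), hu.2⟩
  have hfin : volume (Ioc 0 (S.cdf t (-R)) ∪ Ico (S.cdf t R) 1) ≠ ⊤ := by
    refine (measure_union_lt_top ?_ ?_).ne <;> simp
  have hl := (S.isCDF ht).mem_Icc (-R)
  have hr := (S.isCDF ht).mem_Icc R
  calc _ ≤ volume.real (Ioc 0 (S.cdf t (-R)) ∪ Ico (S.cdf t R) 1) := measureReal_mono hsub hfin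
    _ ≤ volume.real (Ioc 0 (S.cdf t (-R))) + volume.real (Ico (S.cdf t R) 1) :=
        measureReal_union_le _ _
    _ = tailMass (S.cdf t) R := by
        rw [Real.volume_real_Ioc_of_le hl.1, Real.volume_real_Ico_of_le hr.2, sub_zero, tailMass]

variable {F G : PositiveFlow a b}

/- The error is carried by the quantiles of size at least `R`. -/
theorem norm_setIntegral_le_of_eq_zero_of_abs_quantile_lt {e : ℝ → ℝ → ℝ} {t₁ t₂ R L δ : ℝ}
    (h1 : 0 < t₁) (h12 : t₁ ≤ t₂) (hInt : IntegrableOn (uncurry e) (Ioc t₁ t₂ ×ˢ Ioo 0 1))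
    (hzero : ∀ t u, |F.quantile t u| < R → |G.quantile t u| < R → e t u = 0)
    (hL : ∀ t, ∀ u ∈ Ioo (0 : ℝ) 1, ‖e t u‖ ≤ L)
    (hδ : ∀ t ∈ Ioc t₁ t₂, L * (tailMass (F.cdf t) R + tailMass (G.cdf t) R) ≤ δ) :
    ‖∫ q in Ioc t₁ t₂ ×ˢ Ioo (0 : ℝ) 1, uncurry e q‖ ≤ δ * (t₂ - t₁) := by
  have hslice : ∀ t ∈ Ioc t₁ t₂, ‖∫ u in Ioo (0 : ℝ) 1, e t u‖ ≤ δ := fun t ht => by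
    have ht0 : 0 < t := h1.trans ht.1
    let E := {u ∈ Ioo (0 : ℝ) 1 | R ≤ |F.quantile t u|} ∪ {u ∈ Ioo (0 : ℝ) 1 | R ≤ |G.quantile t u|}
    have hsub : E ⊆ Ioo 0 1 := union_subset (sep_subset _ _) (sep_subset _ _)
    have hE : ∀ u ∈ Ioo (0 : ℝ) 1 \ E, e t u = 0 := fun u hu =>
      hzero t u (not_le.1 fun h => hu.2 (Or.inl ⟨hu.1, h⟩))
        (not_le.1 fun h => hu.2 (Or.inr ⟨hu.1, h⟩))
    have hvol := (measureReal_union_le (μ := volume) {u ∈ Ioo (0 : ℝ) 1 | R ≤ |F.quantile t u|}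
      {u ∈ Ioo (0 : ℝ) 1 | R ≤ |G.quantile t u|}).trans
      (add_le_add (F.volume_real_le_abs_quantile_le ht0 R) (G.volume_real_le_abs_quantile_le ht0 R))
    have hL0 : 0 ≤ L := (norm_nonneg _).trans (hL t (1 / 2) (by norm_num))
    rw [setIntegral_eq_of_subset_of_forall_sdiff_eq_zero measurableSet_Ioo hsub hE]
    exact (norm_setIntegral_le_of_norm_le_const ((measure_mono hsub).trans_lt measure_Ioo_lt_top)
      fun u hu => hL t u (hsub hu)).trans
        ((mul_le_mul_of_nonneg_left hvol hL0).trans (hδ t ht))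
  rw [Measure.volume_eq_prod] at hInt ⊢
  rw [setIntegral_prod _ hInt]
  refine (norm_setIntegral_le_of_norm_le_const measure_Ioc_lt_top hslice).trans_eq ?_
  rw [Real.volume_real_Ioc_of_le h12]

theorem abs_truncError_le {p : ℝ} {T : ℝ → ℝ} {t u C K M : ℝ} (hp : 2 ≤ p) (haC : |a u| ≤ C)
    (hbC : |b u| ≤ C) (hM : 1 ≤ M) (hgap : |truncGap F G T t u| ≤ M)
    (hgap' : |truncGap F G (deriv T) t u| ≤ 1)
    (hgap'' : |truncGap F G (deriv (deriv T)) t u| ≤ K) :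
    |truncError F G p T t u| ≤ C * (p * (1 + 1 / 2 * K) + p * (p - 1) / 2) * M ^ (p - 1) := by
  have hp0 : 0 ≤ p := by linarith
  have hp1 : 0 ≤ p - 1 := by linarith
  have : 0 ≤ C := (abs_nonneg _).trans haC
  have hpow : |truncGap F G T t u| ^ (p - 2) ≤ M ^ (p - 2) :=
    Real.rpow_le_rpow (abs_nonneg _) hgap (sub_nonneg.2 hp)
  have hM2 : M ^ (p - 2) * M = M ^ (p - 1) := by
    rw [← Real.rpow_add_one (by positivity)]
    congr 1
    ring
  have hM1 : M ^ (p - 2) ≤ M ^ (p - 1) := Real.rpow_le_rpow_of_exponent_le hM (by linarith)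
  calc |truncError F G p T t u|
      ≤ p * (|truncGap F G T t u| ^ (p - 2) * |truncGap F G T t u|) *
          (|truncGap F G (deriv T) t u| * |b u| +
            1 / 2 * |truncGap F G (deriv (deriv T)) t u| * |a u|) +
        p * (p - 1) / 2 * |truncGap F G T t u| ^ (p - 2) * |truncGap F G (deriv T) t u| ^ 2 *
          |a u| := by
        refine (abs_add_le _ _).trans (add_le_add ?_ (le_of_eq ?_))
        · rw [abs_mul, abs_mul, abs_mul, abs_of_nonneg hp0, abs_of_nonneg (by positivity)]
          gcongr
          refine (abs_add_le _ _).trans (le_of_eq ?_)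
          rw [abs_mul, abs_mul, abs_mul, abs_of_pos (one_half_pos (α := ℝ))]
        · rw [abs_mul, abs_mul, abs_mul, abs_pow, abs_of_nonneg (by positivity),
            abs_of_nonneg (by positivity)]
    _ ≤ p * (M ^ (p - 2) * M) * (1 * C + 1 / 2 * K * C) +
        p * (p - 1) / 2 * M ^ (p - 1) * 1 ^ 2 * C := by
        have hK : 0 ≤ K := (abs_nonneg _).trans hgap''
        gcongr
        exact hpow.trans hM1
    _ = C * (p * (1 + 1 / 2 * K) + p * (p - 1) / 2) * M ^ (p - 1) := by
        rw [hM2]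
        ring

theorem exists_abs_truncError_trunc_le {p : ℝ} (hp : 2 ≤ p) (ha : ContinuousOn a (Icc 0 1))
    (hb : ContinuousOn b (Icc 0 1)) : ∃ L, ∀ R, 1 ≤ R → ∀ t, ∀ u ∈ Ioo (0 : ℝ) 1,
      |truncError F G p (trunc R) t u| ≤ L * R ^ (p - 1) := by
  obtain ⟨Ca, hCa⟩ := isCompact_Icc.exists_bound_of_continuousOn ha
  obtain ⟨Cb, hCb⟩ := isCompact_Icc.exists_bound_of_continuousOn hb
  obtain ⟨K, hK⟩ := hasCompactSupport_cutoff.deriv.exists_bound_of_continuous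
    (contDiff_cutoff.continuous_deriv (by simp))
  let I := ∫ y, cutoff y
  have hI : 0 ≤ I := integral_nonneg fun y => (cutoff_mem_Icc y).1
  refine ⟨max Ca Cb * (p * (1 + 1 / 2 * (K + K)) + p * (p - 1) / 2) * (1 + 2 * I) ^ (p - 1),
    fun R hR t u hu => ?_⟩
  have hR0 : 0 < R := one_pos.trans_le hR
  have hgap : |truncGap F G (trunc R) t u| ≤ (1 + 2 * I) * R := by
    refine (abs_sub _ _).trans ?_
    linarith [abs_trunc_le hR0 (F.quantile t u), abs_trunc_le hR0 (G.quantile t u)]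
  have hgap' : |truncGap F G (deriv (trunc R)) t u| ≤ 1 := by
    rw [truncGap, deriv_trunc, abs_le]
    constructor <;> linarith [(cutoff_mem_Icc (F.quantile t u / R)).1,
      (cutoff_mem_Icc (F.quantile t u / R)).2, (cutoff_mem_Icc (G.quantile t u / R)).1,
      (cutoff_mem_Icc (G.quantile t u / R)).2]
  have hderiv2 : ∀ x, |deriv (deriv (trunc R)) x| ≤ K := fun x => by
    rw [deriv_deriv_trunc, abs_div, abs_of_pos hR0]
    exact (div_le_self (abs_nonneg _) hR).trans (hK _)
  have hgap'' : |truncGap F G (deriv (deriv (trunc R))) t u| ≤ K + K :=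
    (abs_sub _ _).trans (add_le_add (hderiv2 _) (hderiv2 _))
  have hu' := Ioo_subset_Icc_self hu
  refine (abs_truncError_le hp ((hCa u hu').trans (le_max_left _ _))
    ((hCb u hu').trans (le_max_right _ _)) ?_ hgap hgap' hgap'').trans_eq ?_
  · nlinarith
  · rw [Real.mul_rpow (by positivity) hR0.le]
    ring

theorem exists_norm_setIntegral_truncError_le {p : ℝ} (hp : 2 ≤ p) (ha : ContinuousOn a (Icc 0 1))
    (hb : ContinuousOn b (Icc 0 1)) : ∃ L, 0 ≤ L ∧ ∀ R, 1 ≤ R → ∀ t₁ t₂ δ, 0 < t₁ → t₁ ≤ t₂ →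
      (∀ t ∈ Ioc t₁ t₂, R ^ (p - 1) * (tailMass (F.cdf t) R + tailMass (G.cdf t) R) ≤ δ) →
      ‖∫ q in Ioc t₁ t₂ ×ˢ Ioo (0 : ℝ) 1, uncurry (truncError F G p (trunc R)) q‖ ≤
        L * δ * (t₂ - t₁) := by
  obtain ⟨L, hL⟩ := exists_abs_truncError_trunc_le (F := F) (G := G) hp ha hb
  have hL0 : 0 ≤ L := by
    simpa using (abs_nonneg _).trans (hL 1 le_rfl 0 (1 / 2) (by norm_num))
  refine ⟨L, hL0, fun R hR t₁ t₂ δ h1 h12 hδ => ?_⟩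
  have hT := isTruncation_trunc (one_pos.trans_le hR).ne'
  refine norm_setIntegral_le_of_eq_zero_of_abs_quantile_lt (F := F) (G := G) (R := R) h1 h12
    (integrableOn_truncError_and_truncDissipation hT hp ha hb h1 t₂).1 (fun t u hX hY => ?_)
    (hL R hR) fun t ht => ?_
  · have hgap' : truncGap F G (deriv (trunc R)) t u = 0 := by
      rw [truncGap, deriv_trunc_eq_one hX.le, deriv_trunc_eq_one hY.le, sub_self]
    have hgap'' : truncGap F G (deriv (deriv (trunc R))) t u = 0 := by
      rw [truncGap, deriv_deriv_trunc_eq_zero hX, deriv_deriv_trunc_eq_zero hY, sub_self]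
    simp only [truncError, hgap', hgap'']
    ring
  · rw [mul_assoc]
    exact mul_le_mul_of_nonneg_left (hδ t ht) hL0

end TruncationError

/-! ### Removing the truncation -/

theorem integrable_of_monotone_of_integral_le {α : Type*} [MeasurableSpace α] {m : Measure α}
    {f : ℕ → α → ℝ} {g : α → ℝ} {K : ℝ} (hf : ∀ n, Integrable (f n) m)
    (hmono : ∀ᵐ x ∂m, Monotone fun n => f n x)
    (hlim : ∀ᵐ x ∂m, Tendsto (fun n => f n x) atTop (𝓝 (g x)))
    (hK : ∀ᶠ n in atTop, ∫ x, f n x ∂m ≤ K) : Integrable g m := by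
  refine ⟨aestronglyMeasurable_of_tendsto_ae _ (fun n => (hf n).1) hlim, ?_⟩
  have hbound : ∀ᶠ n in atTop, ∫⁻ x, ‖f n x‖ₑ ∂m ≤ ENNReal.ofReal (K + 2 * ∫ x, ‖f 0 x‖ ∂m) := by
    filter_upwards [hK] with n hn
    rw [← ofReal_integral_norm_eq_lintegral_enorm (hf n)]
    refine ENNReal.ofReal_le_ofReal ((integral_mono_ae (hf n).norm
      ((hf n).add ((hf 0).norm.const_mul 2)) ?_).trans ?_)
    · filter_upwards [hmono] with x hx
      have := hx n.zero_le
      simp only [Pi.add_apply, Real.norm_eq_abs]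
      exact abs_le'.2 ⟨by linarith [abs_nonneg (f 0 x)], by linarith [neg_abs_le (f 0 x)]⟩
    · rw [integral_add' (hf n) ((hf 0).norm.const_mul 2), integral_const_mul]
      gcongr
  calc ∫⁻ x, ‖g x‖ₑ ∂m = ∫⁻ x, liminf (fun n => ‖f n x‖ₑ) atTop ∂m :=
        lintegral_congr_ae (hlim.mono fun x hx => hx.enorm.liminf_eq.symm)
    _ ≤ liminf (fun n => ∫⁻ x, ‖f n x‖ₑ ∂m) atTop :=
        lintegral_liminf_le' fun n => (hf n).1.aemeasurable.enorm
    _ ≤ ENNReal.ofReal (K + 2 * ∫ x, ‖f 0 x‖ ∂m) := liminf_le_of_frequently_le' hbound.frequently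
    _ < ⊤ := ENNReal.ofReal_lt_top

theorem tendsto_natCast_add_one_atTop : Tendsto (fun n : ℕ => (n : ℝ) + 1) atTop atTop :=
  tendsto_atTop_add_const_right _ _ tendsto_natCast_atTop_atTop

section Limit

variable {a b : ℝ → ℝ} {F G : PositiveFlow a b} {p t u : ℝ}

theorem eventually_truncGap_trunc_eq (F G : PositiveFlow a b) (t u : ℝ) :
    ∀ᶠ R in atTop, truncGap F G (trunc R) t u = truncGap F G id t u := by
  filter_upwards [eventually_ge_atTop |F.quantile t u|, eventually_ge_atTop |G.quantile t u|]
    with R hX hY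
  simp only [truncGap, trunc_eq_self hX, trunc_eq_self hY, id]

theorem eventually_truncDissipation_trunc_eq (F G : PositiveFlow a b) (p t u : ℝ) :
    ∀ᶠ R in atTop, truncDissipation F G p (trunc R) t u = truncDissipation F G p id t u := by
  filter_upwards [eventually_truncGap_trunc_eq F G t u, eventually_ge_atTop |F.quantile t u|,
    eventually_ge_atTop |G.quantile t u|] with R hgap hX hY
  simp only [truncDissipation, hgap, deriv_trunc_eq_one hX, deriv_trunc_eq_one hY, deriv_id]

theorem abs_truncGap_trunc_le {R R' : ℝ} (hR : 0 < R) (hRR' : R ≤ R') :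
    |truncGap F G (trunc R) t u| ≤ |truncGap F G (trunc R') t u| :=
  abs_trunc_sub_trunc_le hR hRR' _ _

theorem truncDissipation_trunc_nonneg (ha0 : ∀ v ∈ Icc (0 : ℝ) 1, 0 ≤ a v) (ht : 0 < t)
    (hu : u ∈ Ioo (0 : ℝ) 1) (R : ℝ) : 0 ≤ truncDissipation F G p (trunc R) t u := by
  have := ha0 u (Ioo_subset_Icc_self hu)
  have := F.densityQuantile_pos ht u
  have := G.densityQuantile_pos ht u
  have := (cutoff_mem_Icc (F.quantile t u / R)).1
  have := (cutoff_mem_Icc (G.quantile t u / R)).1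
  rw [truncDissipation, deriv_trunc]
  positivity

theorem truncDissipation_trunc_le (ha0 : ∀ v ∈ Icc (0 : ℝ) 1, 0 ≤ a v) (hp : 2 ≤ p) (ht : 0 < t)
    (hu : u ∈ Ioo (0 : ℝ) 1) {R R' : ℝ} (hR : 0 < R) (hRR' : R ≤ R') :
    truncDissipation F G p (trunc R) t u ≤ truncDissipation F G p (trunc R') t u := by
  have := ha0 u (Ioo_subset_Icc_self hu)
  have := F.densityQuantile_pos ht u
  have := G.densityQuantile_pos ht u
  have := (cutoff_mem_Icc (F.quantile t u / R)).1
  have := (cutoff_mem_Icc (G.quantile t u / R)).1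
  have := (cutoff_mem_Icc (F.quantile t u / R')).1
  have hgap := Real.rpow_le_rpow (abs_nonneg _)
    (abs_truncGap_trunc_le (F := F) (G := G) (t := t) (u := u) hR hRR') (sub_nonneg.2 hp)
  have hX := cutoff_div_le_cutoff_div hR hRR' (F.quantile t u)
  have hY := cutoff_div_le_cutoff_div hR hRR' (G.quantile t u)
  simp only [truncDissipation, deriv_trunc]
  gcongr

theorem integrableOn_abs_truncGap_trunc_rpow (hp : 0 ≤ p) (ht : 0 < t) {R : ℝ} (hR : 0 < R) :
    IntegrableOn (fun u => |truncGap F G (trunc R) t u| ^ p) (Ioo 0 1) := by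
  refine Integrable.of_bound (C := (R * (∫ y, cutoff y) + R * ∫ y, cutoff y) ^ p) ?_
    (Eventually.of_forall fun u => ?_)
  · exact ((continuousOn_abs_truncGap_rpow (lipschitzWith_trunc R).continuous hp).comp
      (f := fun u : ℝ => (t, u)) (by fun_prop)
      fun u hu => ⟨ht, hu⟩).aestronglyMeasurable measurableSet_Ioo
  · rw [Real.norm_of_nonneg (by positivity)]
    gcongr
    exact (abs_sub _ _).trans (add_le_add (abs_trunc_le hR _) (abs_trunc_le hR _))

theorem tendsto_truncEnergy_trunc (hp : 0 ≤ p) (ht : 0 < t) {K : ℝ}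
    (hK : ∀ᶠ R in atTop, truncEnergy F G p (trunc R) t ≤ K) :
    Tendsto (fun n : ℕ => truncEnergy F G p (trunc (n + 1)) t) atTop
      (𝓝 (truncEnergy F G p id t)) := by
  have hInt := fun n : ℕ =>
    integrableOn_abs_truncGap_trunc_rpow (F := F) (G := G) hp ht n.cast_add_one_pos
  have hmono : ∀ u, Monotone fun n : ℕ => |truncGap F G (trunc (n + 1)) t u| ^ p :=
    fun u n m hnm => Real.rpow_le_rpow (abs_nonneg _)
      (abs_truncGap_trunc_le n.cast_add_one_pos (by gcongr)) hp
  have hlim : ∀ u, Tendsto (fun n : ℕ => |truncGap F G (trunc (n + 1)) t u| ^ p) atTop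
      (𝓝 (|truncGap F G id t u| ^ p)) := fun u => by
    refine tendsto_nhds_of_eventually_eq ?_
    filter_upwards [tendsto_natCast_add_one_atTop.eventually
      (eventually_truncGap_trunc_eq F G t u)] with n hn
    rw [hn]
  exact integral_tendsto_of_tendsto_of_monotone hInt
    (integrable_of_monotone_of_integral_le hInt (ae_of_all _ hmono) (ae_of_all _ hlim)
      (tendsto_natCast_add_one_atTop.eventually hK)) (ae_of_all _ hmono) (ae_of_all _ hlim)

theorem eventually_abs_setIntegral_truncError_le (hp : 2 ≤ p) (ha : ContinuousOn a (Icc 0 1))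
    (hb : ContinuousOn b (Icc 0 1)) (hF : HasUniformTailDecay (p - 1) F.cdf)
    (hG : HasUniformTailDecay (p - 1) G.cdf) (t : ℝ) {ε : ℝ} (hε : 0 < ε) :
    ∀ᶠ R in atTop, ∀ s ∈ Ioc 0 t,
      |∫ q in Ioc s t ×ˢ Ioo (0 : ℝ) 1, uncurry (truncError F G p (trunc R)) q| ≤ ε := by
  obtain ⟨L, hL0, hL⟩ := exists_norm_setIntegral_truncError_le (F := F) (G := G) hp ha hb
  let δ := ε / (L * |t| + 1)
  have hδ : 0 < δ := by positivity
  filter_upwards [hF t _ (half_pos hδ), hG t _ (half_pos hδ), eventually_ge_atTop 1]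
    with R hFR hGR hR s hs
  have htail : ∀ r ∈ Ioc s t, R ^ (p - 1) * (tailMass (F.cdf r) R + tailMass (G.cdf r) R) ≤ δ :=
    fun r hr => by
      have hr' : r ∈ Ioc 0 t := ⟨hs.1.trans hr.1, hr.2⟩
      linarith [hFR r hr', hGR r hr']
  calc |∫ q in Ioc s t ×ˢ Ioo (0 : ℝ) 1, uncurry (truncError F G p (trunc R)) q|
      ≤ L * δ * (t - s) := hL R hR s t δ hs.1 hs.2 htail
    _ ≤ L * δ * |t| := by
        gcongr
        linarith [le_abs_self t, hs.1]
    _ ≤ δ * (L * |t| + 1) := by linarith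
    _ = ε := div_mul_cancel₀ _ (by positivity)

section Coefficients

variable (hp : 2 ≤ p) (ha : DifferentiableOn ℝ a (Icc 0 1)) (hb : ContinuousOn b (Icc 0 1))
  (ha0 : ∀ v ∈ Icc (0 : ℝ) 1, 0 ≤ a v)
include hp ha hb ha0

theorem truncEnergy_trunc_le {t₁ t₂ R : ℝ} (h1 : 0 < t₁) (h12 : t₁ ≤ t₂) (hR : 0 < R) :
    truncEnergy F G p (trunc R) t₂ ≤ truncEnergy F G p (trunc R) t₁ +
      ∫ q in Ioc t₁ t₂ ×ˢ Ioo (0 : ℝ) 1, uncurry (truncError F G p (trunc R)) q := by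
  have hdiss : 0 ≤ ∫ q in Ioc t₁ t₂ ×ˢ Ioo (0 : ℝ) 1,
      uncurry (truncDissipation F G p (trunc R)) q :=
    setIntegral_nonneg (measurableSet_Ioc.prod measurableSet_Ioo) fun q hq =>
      truncDissipation_trunc_nonneg ha0 (h1.trans hq.1.1) hq.2 R
  have hcoeff : 0 ≤ p * (p - 1) / 2 := by nlinarith
  have := truncEnergy_sub_truncEnergy (F := F) (G := G) (isTruncation_trunc hR.ne') hp ha hb h1 h12
  linarith [mul_nonneg hcoeff hdiss]

variable (hFtail : HasUniformTailDecay (p - 1) F.cdf) (hGtail : HasUniformTailDecay (p - 1) G.cdf)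
include hFtail hGtail

/- The error on `(s, t]` is small uniformly in `s`, which allows `s → 0` at a fixed truncation. -/
theorem exists_eventually_truncEnergy_trunc_le (hF : IsCDFFlow F.cdf) (hG : IsCDFFlow G.cdf)
    (hW : Wdist p (F.cdf 0) (G.cdf 0) < ⊤) :
    ∃ K, ∀ t, 0 < t → ∀ᶠ R in atTop, truncEnergy F G p (trunc R) t ≤ K := by
  have hp0 : 0 < p := by linarith
  refine ⟨(∫⁻ u in Ioo (0 : ℝ) 1,
    ENNReal.ofReal (|F.quantile 0 u - G.quantile 0 u| ^ p)).toReal + 1, fun t ht => ?_⟩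
  filter_upwards [eventually_gt_atTop 0, eventually_abs_setIntegral_truncError_le hp
    ha.continuousOn hb hFtail hGtail t one_pos] with R hR herr
  have hs : ∀ᶠ s in 𝓝[>] (0 : ℝ),
      truncEnergy F G p (trunc R) t ≤ truncEnergy F G p (trunc R) s + 1 := by
    filter_upwards [Ioc_mem_nhdsGT ht] with s hs
    have := truncEnergy_trunc_le (F := F) (G := G) hp ha hb ha0 hs.1 hs.2 hR
    linarith [(abs_le.1 (herr s hs)).2]
  refine (ge_of_tendsto ((tendsto_truncEnergy_zero hF hG hp0.le (lipschitzWith_trunc R).continuous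
    (abs_trunc_le hR)).add_const 1) hs).trans ?_
  gcongr
  exact truncEnergy_le_toReal_lintegral hp0.le (lipschitzWith_trunc R)
    (lintegral_lt_top_of_wdist_lt_top hp0 hW)

variable {t₁ t₂ K : ℝ} (h1 : 0 < t₁) (h12 : t₁ ≤ t₂)
  (hK : ∀ t, 0 < t → ∀ᶠ R in atTop, truncEnergy F G p (trunc R) t ≤ K)
include h1 h12 hK

theorem integrableOn_truncDissipation_id_and_tendsto :
    IntegrableOn (uncurry (truncDissipation F G p id)) (Ioc t₁ t₂ ×ˢ Ioo 0 1) ∧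
    Tendsto (fun n : ℕ => ∫ q in Ioc t₁ t₂ ×ˢ Ioo (0 : ℝ) 1,
        uncurry (truncDissipation F G p (trunc (n + 1))) q) atTop
      (𝓝 (∫ q in Ioc t₁ t₂ ×ˢ Ioo (0 : ℝ) 1, uncurry (truncDissipation F G p id) q)) := by
  have hT := fun n : ℕ => isTruncation_trunc (n.cast_add_one_pos (α := ℝ)).ne'
  have hInt := fun n : ℕ => (integrableOn_truncError_and_truncDissipation (F := F) (G := G)
    (hT n) hp ha.continuousOn hb h1 t₂).2
  have hmono : ∀ᵐ q ∂volume.restrict (Ioc t₁ t₂ ×ˢ Ioo (0 : ℝ) 1),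
      Monotone fun n : ℕ => uncurry (truncDissipation F G p (trunc (n + 1))) q := by
    filter_upwards [ae_restrict_mem (measurableSet_Ioc.prod measurableSet_Ioo)] with q hq n m hnm
    exact truncDissipation_trunc_le ha0 hp (h1.trans hq.1.1) hq.2 n.cast_add_one_pos (by gcongr)
  have hlim : ∀ q : ℝ × ℝ,
      Tendsto (fun n : ℕ => uncurry (truncDissipation F G p (trunc (n + 1))) q) atTop
        (𝓝 (uncurry (truncDissipation F G p id) q)) := fun q =>
    tendsto_nhds_of_eventually_eq (tendsto_natCast_add_one_atTop.eventually
      (eventually_truncDissipation_trunc_eq F G p q.1 q.2))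
  have hcoeff : 0 < p * (p - 1) / 2 := by nlinarith
  have hbound : ∀ᶠ n : ℕ in atTop, ∫ q in Ioc t₁ t₂ ×ˢ Ioo (0 : ℝ) 1,
      uncurry (truncDissipation F G p (trunc (n + 1))) q ≤ (K + 1) / (p * (p - 1) / 2) := by
    filter_upwards [tendsto_natCast_add_one_atTop.eventually (hK t₁ h1),
      tendsto_natCast_add_one_atTop.eventually (eventually_abs_setIntegral_truncError_le hp
        ha.continuousOn hb hFtail hGtail t₂ one_pos)] with n hn herr
    rw [le_div_iff₀' hcoeff]
    have hnonneg : 0 ≤ truncEnergy F G p (trunc (n + 1)) t₂ :=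
      integral_nonneg fun u => by positivity
    have := truncEnergy_sub_truncEnergy (F := F) (G := G) (hT n) hp ha hb h1 h12
    linarith [(abs_le.1 (herr t₁ ⟨h1, h12⟩)).2]
  have hlimInt := integrable_of_monotone_of_integral_le hInt hmono (ae_of_all _ hlim) hbound
  exact ⟨hlimInt, integral_tendsto_of_tendsto_of_monotone hInt hlimInt hmono (ae_of_all _ hlim)⟩

theorem truncEnergy_id_sub_truncEnergy_id :
    truncEnergy F G p id t₂ - truncEnergy F G p id t₁ =
      -(p * (p - 1) / 2) *
        ∫ q in Ioc t₁ t₂ ×ˢ Ioo (0 : ℝ) 1, uncurry (truncDissipation F G p id) q := by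
  have hp0 : 0 ≤ p := by linarith
  have h2 := h1.trans_le h12
  have herr : Tendsto (fun n : ℕ => ∫ q in Ioc t₁ t₂ ×ˢ Ioo (0 : ℝ) 1,
      uncurry (truncError F G p (trunc (n + 1))) q) atTop (𝓝 0) := by
    refine Metric.tendsto_nhds.2 fun ε hε => ?_
    filter_upwards [tendsto_natCast_add_one_atTop.eventually
      (eventually_abs_setIntegral_truncError_le hp ha.continuousOn hb hFtail hGtail t₂
        (half_pos hε))] with n hn
    rw [Real.dist_0_eq_abs]
    exact (hn t₁ ⟨h1, h12⟩).trans_lt (half_lt_self hε)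
  obtain ⟨-, hdiss⟩ :=
    integrableOn_truncDissipation_id_and_tendsto hp ha hb ha0 hFtail hGtail h1 h12 hK
  refine tendsto_nhds_unique ((tendsto_truncEnergy_trunc hp0 h2 (hK t₂ h2)).sub
    (tendsto_truncEnergy_trunc hp0 h1 (hK t₁ h1))) ?_
  simp only [truncEnergy_sub_truncEnergy (isTruncation_trunc (Nat.cast_add_one_pos _).ne') hp ha hb
    h1 h12]
  simpa only [zero_sub, neg_mul] using herr.sub (hdiss.const_mul (p * (p - 1) / 2))

end Coefficients

end Limit

/-! ### The dissipation formula -/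

theorem truncDissipation_id {a b : ℝ → ℝ} (F G : PositiveFlow a b) (p : ℝ) {t u : ℝ} (ht : 0 < t)
    (hu : u ∈ Ioo (0 : ℝ) 1) :
    truncDissipation F G p id t u = a u * |F.quantile t u - G.quantile t u| ^ (p - 2) *
      (deriv (F.quantile t) u - deriv (G.quantile t) u) ^ 2 /
        (deriv (F.quantile t) u * deriv (G.quantile t) u) := by
  have := (F.densityQuantile_pos ht u).ne'
  have := (G.densityQuantile_pos ht u).ne'
  rw [(F.hasDerivAt_quantile ht hu).deriv, (G.hasDerivAt_quantile ht hu).deriv]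
  simp only [truncDissipation, truncGap, id, deriv_id]
  field_simp
  ring

theorem PositiveFlow.energy_sub_energy {a b : ℝ → ℝ} (F G : PositiveFlow a b) {p : ℝ} (hp : 2 ≤ p)
    (ha : DifferentiableOn ℝ a (Icc 0 1)) (hb : ContinuousOn b (Icc 0 1))
    (ha0 : ∀ v ∈ Icc (0 : ℝ) 1, 0 ≤ a v) (hFtail : HasUniformTailDecay (p - 1) F.cdf)
    (hGtail : HasUniformTailDecay (p - 1) G.cdf) (hF : IsCDFFlow F.cdf) (hG : IsCDFFlow G.cdf)
    (hW : Wdist p (F.cdf 0) (G.cdf 0) < ⊤) {t₁ t₂ : ℝ} (h1 : 0 < t₁) (h12 : t₁ ≤ t₂) :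
    (∫ u in Ioo (0 : ℝ) 1, |F.quantile t₂ u - G.quantile t₂ u| ^ p)
        - (∫ u in Ioo (0 : ℝ) 1, |F.quantile t₁ u - G.quantile t₁ u| ^ p)
      = -(p * (p - 1) / 2) * ∫ t in t₁..t₂, ∫ u in Ioo (0 : ℝ) 1,
          a u * |F.quantile t u - G.quantile t u| ^ (p - 2) *
            (deriv (F.quantile t) u - deriv (G.quantile t) u) ^ 2 /
              (deriv (F.quantile t) u * deriv (G.quantile t) u) := by
  obtain ⟨K, hK⟩ := exists_eventually_truncEnergy_trunc_le hp ha hb ha0 hFtail hGtail hF hG hW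
  obtain ⟨hInt, -⟩ :=
    integrableOn_truncDissipation_id_and_tendsto hp ha hb ha0 hFtail hGtail h1 h12 hK
  refine (truncEnergy_id_sub_truncEnergy_id hp ha hb ha0 hFtail hGtail h1 h12 hK).trans ?_
  congr 1
  rw [Measure.volume_eq_prod] at hInt ⊢
  rw [setIntegral_prod _ hInt, intervalIntegral.integral_of_le h12]
  exact setIntegral_congr_fun measurableSet_Ioc fun t ht =>
    setIntegral_congr_fun measurableSet_Ioo fun u hu =>
      truncDissipation_id F G p (h1.trans ht.1) hu

theorem HasClassicalRegularity.exists_positiveFlow {a b : ℝ → ℝ} {F : ℝ → ℝ → ℝ}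
    (hcl : HasClassicalRegularity a b F) (ha : ContDiffOn ℝ 1 a (Icc 0 1))
    (hpos : ∃ c > (0 : ℝ), ∀ u ∈ Icc (0 : ℝ) 1, c ≤ a u) (hb : ContinuousOn b (Icc 0 1))
    (hF : ∀ t, 0 < t → IsCDF (F t)) : ∃ S : PositiveFlow a b, S.cdf = F := by
  obtain ⟨c, hc, hac⟩ := hpos
  obtain ⟨S, rfl⟩ := hcl.exists_classicalFlow (ha.differentiableOn one_ne_zero) hb hF
  exact ⟨⟨S, fun ht x => S.dx_pos hc hac ha.continuousOn
    (ha.continuousOn_derivWithin (uniqueDiffOn_Icc zero_lt_one) le_rfl) hb ht x⟩, rfl⟩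

theorem tendsto_rpow_mul_tailMass {f g : ℝ → ℝ} {q : ℝ} (hf : IsCDF f) (hg : IsCDF g)
    (htop : Tendsto (fun x => |x| ^ q * (tl f x + tl g x)) atTop (𝓝 0))
    (hbot : Tendsto (fun x => |x| ^ q * (tl f x + tl g x)) atBot (𝓝 0)) :
    Tendsto (fun r => r ^ q * tailMass f r) atTop (𝓝 0) := by
  have hsum := htop.add (hbot.comp tendsto_neg_atTop_atBot)
  rw [add_zero] at hsum
  refine squeeze_zero' ?_ ?_ hsum
  · filter_upwards [eventually_ge_atTop 0] with r hr
    exact mul_nonneg (Real.rpow_nonneg hr q) (hf.tailMass_mem_Icc r).1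
  · filter_upwards [eventually_gt_atTop 0] with r hr
    have hle := mul_nonneg (Real.rpow_nonneg hr.le q) (hg.tailMass_mem_Icc r).1
    rw [tailMass_eq_tl_add_tl _ hr] at hle ⊢
    simp only [comp_apply, abs_neg, abs_of_pos hr]
    linarith

theorem wasserstein_flow_derivative_general {a b : ℝ → ℝ} (ha : ContDiffOn ℝ 1 a (Icc 0 1))
    (hpos : ∃ c > (0 : ℝ), ∀ u ∈ Icc (0 : ℝ) 1, c ≤ a u) (hb : ContinuousOn b (Icc 0 1))
    {μ ν : Measure ℝ} [IsProbabilityMeasure μ] [IsProbabilityMeasure ν] {F G : ℝ → ℝ → ℝ}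
    (hF : IsWeakSolution (primitive a) (primitive b) (cdfOf μ) F) (hFflow : IsCDFFlow F)
    (hG : IsWeakSolution (primitive a) (primitive b) (cdfOf ν) G) (hGflow : IsCDFFlow G)
    (hFcl : HasClassicalRegularity a b F) (hGcl : HasClassicalRegularity a b G)
    {p : ℝ} (hp : 2 ≤ p) (hW : Wdist p (cdfOf μ) (cdfOf ν) < ⊤)
    (htop : Tendsto (fun x => |x| ^ (p - 1) * (tl (cdfOf μ) x + tl (cdfOf ν) x)) atTop (𝓝 0))
    (hbot : Tendsto (fun x => |x| ^ (p - 1) * (tl (cdfOf μ) x + tl (cdfOf ν) x)) atBot (𝓝 0))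
    {t₁ t₂ : ℝ} (h1 : 0 < t₁) (h12 : t₁ ≤ t₂) :
    (∫ u in Ioo (0 : ℝ) 1, |pinv (F t₂) u - pinv (G t₂) u| ^ p)
        - (∫ u in Ioo (0 : ℝ) 1, |pinv (F t₁) u - pinv (G t₁) u| ^ p)
      = -(p * (p - 1) / 2) * ∫ t in t₁..t₂, ∫ u in Ioo (0 : ℝ) 1,
          a u * |pinv (F t) u - pinv (G t) u| ^ (p - 2) *
            (deriv (pinv (F t)) u - deriv (pinv (G t)) u) ^ 2 /
              (deriv (pinv (F t)) u * deriv (pinv (G t)) u) := by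
  have hp1 : 0 ≤ p - 1 := by linarith
  have ha0 : ∀ u ∈ Icc (0 : ℝ) 1, 0 ≤ a u := fun u hu => by
    obtain ⟨c, hc, hac⟩ := hpos
    exact hc.le.trans (hac u hu)
  obtain ⟨A, hA⟩ := exists_lipschitzOnWith_primitive ha.continuousOn
  obtain ⟨B, hB⟩ := exists_lipschitzOnWith_primitive hb
  obtain ⟨S, rfl⟩ := hFcl.exists_positiveFlow ha hpos hb fun t ht => hFflow.isCDF ht.le
  obtain ⟨S', rfl⟩ := hGcl.exists_positiveFlow ha hpos hb fun t ht => hGflow.isCDF ht.le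
  have hμ := isCDF_cdfOf μ
  have hν := isCDF_cdfOf ν
  refine S.energy_sub_energy S' hp (ha.differentiableOn one_ne_zero) hb ha0
    (hF.hasUniformTailDecay hA hB S.continuousOn_cdf (fun _ => S.isCDF) hμ.monotone hp1
      (tendsto_rpow_mul_tailMass hμ hν htop hbot))
    (hG.hasUniformTailDecay hA hB S'.continuousOn_cdf (fun _ => S'.isCDF) hν.monotone hp1
      (tendsto_rpow_mul_tailMass hν hμ (by simpa only [add_comm] using htop)
        (by simpa only [add_comm] using hbot))) hFflow hGflow ?_ h1 h12
  rwa [hF.apply_zero (hFflow.isCDF le_rfl) hμ, hG.apply_zero (hGflow.isCDF le_rfl) hν]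

/-- Explicit formula for the dissipation of `W_p^p` along two classical probabilistic
solutions `F` and `G`. -/
theorem wasserstein_flow_derivative
    (a b : ℝ → ℝ)
    (ha : ContinuousOn a (Set.Icc 0 1)) (hb : ContinuousOn b (Set.Icc 0 1))
    (ha0 : ∀ u ∈ Set.Icc (0:ℝ) 1, 0 ≤ a u)
    (hD3 : ∃ c > (0:ℝ), ∀ u ∈ Set.Icc (0:ℝ) 1, c ≤ a u)
    (hR1 : ContDiffOn ℝ 1 a (Set.Icc 0 1))
    (μ ν : Measure ℝ) [IsProbabilityMeasure μ] [IsProbabilityMeasure ν]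
    (hμ : Integrable (fun x => |x|) μ) (hν : Integrable (fun x => |x|) ν)
    (F G : ℝ → ℝ → ℝ)
    (hF : IsWeakSolution (primitive a) (primitive b) (cdfOf μ) F) (hFmem : MemF F)
    (hG : IsWeakSolution (primitive a) (primitive b) (cdfOf ν) G) (hGmem : MemF G)
    (hFcl : HasClassicalRegularity a b F) (hGcl : HasClassicalRegularity a b G)
    (hFbd : ∀ t₁ t₂ : ℝ, 0 < t₁ → t₁ < t₂ →
      ∃ M : ℝ, ∀ t ∈ Set.Icc t₁ t₂, ∀ x : ℝ, |deriv (fun y => F t y) x| ≤ M)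
    (hGbd : ∀ t₁ t₂ : ℝ, 0 < t₁ → t₁ < t₂ →
      ∃ M : ℝ, ∀ t ∈ Set.Icc t₁ t₂, ∀ x : ℝ, |deriv (fun y => G t y) x| ≤ M)
    (p : ℝ) (hp : 2 ≤ p)
    (hW : Wdist p (cdfOf μ) (cdfOf ν) < ⊤)
    (htail_top : Tendsto (fun x => |x| ^ (p - 1) * (tl (cdfOf μ) x + tl (cdfOf ν) x))
      atTop (nhds 0))
    (htail_bot : Tendsto (fun x => |x| ^ (p - 1) * (tl (cdfOf μ) x + tl (cdfOf ν) x))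
      atBot (nhds 0)) :
    ∀ t₁ t₂ : ℝ, 0 < t₁ → t₁ < t₂ →
      (∫ u in Set.Ioo (0:ℝ) 1, |pinv (F t₂) u - pinv (G t₂) u| ^ p)
        - (∫ u in Set.Ioo (0:ℝ) 1, |pinv (F t₁) u - pinv (G t₁) u| ^ p)
      = -(p * (p - 1) / 2) *
          ∫ t in t₁..t₂, ∫ u in Set.Ioo (0:ℝ) 1,
            a u * |pinv (F t) u - pinv (G t) u| ^ (p - 2) *
              (deriv (fun v => pinv (F t) v) u - deriv (fun v => pinv (G t) v) u) ^ 2 /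
              (deriv (fun v => pinv (F t) v) u * deriv (fun v => pinv (G t) v) u) := by
  exact fun t₁ t₂ h1 h12 => wasserstein_flow_derivative_general hR1 hD3 hb hF hFmem.isCDFFlow hG
    hGmem.isCDFFlow hFcl hGcl hp hW htail_top htail_bot h1 h12.le
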